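/- There exists a universal constant C > 0 with the following property. Let T = ∇φ be the Brenier map (with φ : ℝ^d → ℝ smooth and convex) sending the standard Gaussian measure γ onto a probability measure μ = e^{-V} dx which is centered and isotropic, and assume that c₁ Id ≥ Hess V(x) ≥ (c₂/(d + |x|)) Id for all x ∈ ℝ^d, with c₁ ≥ 1 and c₂ > 0. Then for every x ∈ ℝ^d, the operator norm of ∇T(x) satisfies ‖∇T(x)‖_op ≤ max(C c₁²/c₂², 1) · (d + |x|²)². -/

import Mathlib

open MeasureTheory Real
open scoped RealInnerProductSpace ENNReal

noncomputable section

/-- The standard Gaussian measure `γ` on `ℝ^d`, with density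
`(2π)^{-d/2} e^{-|x|²/2}` with respect to Lebesgue measure. -/
def stdGaussian (d : ℕ) : Measure (EuclideanSpace ℝ (Fin d)) :=
  volume.withDensity fun x =>
    ENNReal.ofReal ((2 * π) ^ (-(d : ℝ) / 2) * Real.exp (-‖x‖ ^ 2 / 2))

/-- A probability measure on `ℝ^d` is centered if `∫ x dμ(x) = 0`. -/
def IsCentered {d : ℕ} (μ : Measure (EuclideanSpace ℝ (Fin d))) : Prop :=
  ∫ x, x ∂μ = 0

/-- A probability measure on `ℝ^d` is isotropic if `∫ xᵢ xⱼ dμ(x) = δᵢⱼ`. -/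
def IsIsotropic {d : ℕ} (μ : Measure (EuclideanSpace ℝ (Fin d))) : Prop :=
  ∀ i j : Fin d, ∫ x, x i * x j ∂μ = if i = j then 1 else 0

/-- A measure on `ℝ^d` is log-concave if `μ = e^{-V(x)} dx` for some convex `V`. -/
def IsLogConcave {d : ℕ} (μ : Measure (EuclideanSpace ℝ (Fin d))) : Prop :=
  ∃ V : EuclideanSpace ℝ (Fin d) → ℝ, ConvexOn ℝ Set.univ V ∧
    μ = volume.withDensity fun x => ENNReal.ofReal (Real.exp (-V x))

/-- `T = ∇φ` is a Brenier map sending the standard Gaussian onto `μ` if `φ` is convex,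
differentiable, and the pushforward of `γ` under `∇φ` is `μ`. -/
def IsBrenierPotential {d : ℕ} (φ : EuclideanSpace ℝ (Fin d) → ℝ)
    (μ : Measure (EuclideanSpace ℝ (Fin d))) : Prop :=
  ConvexOn ℝ Set.univ φ ∧ Differentiable ℝ φ ∧
    Measure.map (gradient φ) (stdGaussian d) = μ

/-!
The potential solves the Monge–Ampère equation `log det D²φ = κ - |x|²/2 + V (∇φ)`. Put
`w = ⟪x, ∇φ⟫ - φ + B`, which is the Legendre dual of `φ` at `∇φ`, shifted by a constant, and compare
the second difference `δφ(x) = φ(x + h) + φ(x - h) - 2 φ(x)` with `A |h|² w`.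

Where `δφ - A |h|² w` is maximal and positive, concavity of `log det` and the linearised equation
bound the sum of the two Bregman divergences of `V` from `∇φ(x)` to `∇φ(x ± h)` by `(1 + A d) |h|²`.
On the other hand a large second difference of the convex function `φ` forces `∇φ(x ± h)` away from
`∇φ(x)`, so that the lower bound on `D²V` makes this sum at least `2 (1 + A d) |h|²` once `A` is
large compared with `1 / c₂`. Hence `δφ ≤ A |h|² w`, that is `D²φ ≤ A w`. A small multiple of
`(φ + β) w` is subtracted to make sure that the maximum is attained.

Finally `w` is at most a multiple of `(d + |x|²)²`: isotropic log-concave measures have universal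
tails, and since `∇φ` is monotone, a large value of `∇φ` at `x` would put too much mass of the
target far out, whence `|∇φ(x)| ≤ 1200 √d (d + |x|²)`.
-/

open Filter Module Set Topology

section LinearAlgebra

lemma log_det_le_trace_sub_card {ι : Type*} [Fintype ι] [DecidableEq ι] {N : Matrix ι ι ℝ}
    (hN : N.PosSemidef) (hdet : 0 < N.det) : log N.det ≤ N.trace - Fintype.card ι := by
  have hprod : N.det = ∏ i, hN.isHermitian.eigenvalues i := by
    simpa using hN.isHermitian.det_eq_prod_eigenvalues
  have htrace : N.trace = ∑ i, hN.isHermitian.eigenvalues i := by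
    simpa using hN.isHermitian.trace_eq_sum_eigenvalues
  have hne : ∀ i, hN.isHermitian.eigenvalues i ≠ 0 := fun i =>
    Finset.prod_ne_zero_iff.1 (hprod ▸ hdet.ne') i (Finset.mem_univ i)
  calc log N.det = ∑ i, log (hN.isHermitian.eigenvalues i) := by
        rw [hprod, log_prod fun i _ => hne i]
    _ ≤ ∑ i, (hN.isHermitian.eigenvalues i - 1) :=
        Finset.sum_le_sum fun i _ =>
          log_le_sub_one_of_pos ((hN.eigenvalues_nonneg i).lt_of_ne' (hne i))
    _ = N.trace - Fintype.card ι := by simp [htrace]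

variable {E : Type*} [NormedAddCommGroup E] [InnerProductSpace ℝ E]

lemma norm_le_of_isPositive {A : E →L[ℝ] E} (hA : A.IsPositive) {c : ℝ} (hc : 0 ≤ c)
    (h : ∀ v, ⟪A v, v⟫ ≤ c * ‖v‖ ^ 2) : ‖A‖ ≤ c := by
  rw [A.norm_eq_iSup_rayleighQuotient hA.isSymmetric]
  refine ciSup_le fun v => ?_
  have hquot : A.rayleighQuotient v = ⟪A v, v⟫ / ‖v‖ ^ 2 := rfl
  rw [hquot, abs_of_nonneg (div_nonneg (hA.inner_nonneg_left v) (sq_nonneg _))]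
  exact div_le_of_le_mul₀ (sq_nonneg _) hc (h v)

variable {ι : Type*} [DecidableEq ι]

/-- The basis `f` is orthonormal for the bilinear form `⟪A ·, ·⟫`. When `A` is symmetric, such a
basis computes the trace of `A⁻¹ M` as `∑ i, ⟪M (f i), f i⟫`. -/
def IsOrthonormalFor (A : E →L[ℝ] E) (f : Basis ι ℝ E) : Prop :=
  ∀ i j, ⟪A (f i), f j⟫ = if i = j then 1 else 0

variable [Fintype ι]

namespace IsOrthonormalFor

variable {A : E →L[ℝ] E} {f : Basis ι ℝ E}

lemma sum_inner_apply_self (hf : IsOrthonormalFor A f) :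
    ∑ i, ⟪A (f i), f i⟫ = Fintype.card ι := by
  simp [hf _ _]

lemma repr_apply (hf : IsOrthonormalFor A f) (v : E) (i : ι) : f.repr v i = ⟪A (f i), v⟫ := by
  have hv := congrArg (⟪A (f i), ·⟫) (f.sum_repr v)
  simpa [-Basis.sum_repr, inner_sum, real_inner_smul_right, hf _ _] using hv

lemma sum_inner_mul_inner (hf : IsOrthonormalFor A f) (u v : E) :
    ∑ i, ⟪u, f i⟫ * ⟪A (f i), v⟫ = ⟪u, v⟫ := by
  have hv := congrArg (⟪u, ·⟫) (f.sum_repr v)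
  simpa [-Basis.sum_repr, inner_sum, real_inner_smul_right, hf.repr_apply, mul_comm] using hv

end IsOrthonormalFor

lemma gram_mul_toMatrix_apply (f : Basis ι ℝ E) (M : E →L[ℝ] E) (i j : ι) :
    (Matrix.gram ℝ f * LinearMap.toMatrix f f M.toLinearMap) i j = ⟪f i, M (f j)⟫ := by
  have hMf := congrArg (⟪f i, ·⟫) (f.sum_repr (M (f j)))
  simpa [-Basis.sum_repr, Matrix.mul_apply, LinearMap.toMatrix_apply, inner_sum,
    real_inner_smul_right, mul_comm] using hMf

lemma posSemidef_gram_mul_toMatrix (f : Basis ι ℝ E) {M : E →L[ℝ] E} (hM : M.IsPositive) :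
    (Matrix.gram ℝ f * LinearMap.toMatrix f f M.toLinearMap).PosSemidef := by
  refine Matrix.PosSemidef.of_dotProduct_mulVec_nonneg ?_ fun c => ?_
  · ext i j
    rw [Matrix.conjTranspose_apply, gram_mul_toMatrix_apply, gram_mul_toMatrix_apply,
      star_trivial, ← hM.inner_left_eq_inner_right, real_inner_comm]
  · have hform : star c ⬝ᵥ (Matrix.gram ℝ f * LinearMap.toMatrix f f M.toLinearMap).mulVec c
        = ⟪∑ i, c i • f i, M (∑ i, c i • f i)⟫ := by
      simp only [dotProduct, Matrix.mulVec, gram_mul_toMatrix_apply, map_sum, map_smul, sum_inner,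
        inner_sum, real_inner_smul_left, real_inner_smul_right, Finset.mul_sum, star_trivial]
      rw [Finset.sum_comm]
      exact Finset.sum_congr rfl fun i _ => Finset.sum_congr rfl fun j _ => by ring
    rw [hform]
    exact hM.inner_nonneg_right _

lemma IsOrthonormalFor.det_gram_mul_det {A : E →L[ℝ] E} {f : Basis ι ℝ E}
    (hf : IsOrthonormalFor A f) : (Matrix.gram ℝ f).det * A.det = 1 := by
  have hone : Matrix.gram ℝ f * LinearMap.toMatrix f f A.toLinearMap = 1 := by
    ext i j
    rw [gram_mul_toMatrix_apply, real_inner_comm, hf, Matrix.one_apply]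
    simp only [eq_comm]
  simpa [Matrix.det_mul, LinearMap.det_toMatrix] using congrArg Matrix.det hone

/-- Concavity of `log det`: the right-hand side is its first-order expansion at `A`. -/
lemma IsOrthonormalFor.log_det_le {A M : E →L[ℝ] E} {f : Basis ι ℝ E} (hf : IsOrthonormalFor A f)
    (hA : 0 < A.det) (hM : M.IsPositive) (hMdet : 0 < M.det) :
    log M.det ≤ log A.det + ∑ i, ⟪M (f i), f i⟫ - Fintype.card ι := by
  set N := Matrix.gram ℝ f * LinearMap.toMatrix f f M.toLinearMap with hN
  have hdetN : N.det = A.det⁻¹ * M.det := by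
    rw [hN, Matrix.det_mul, LinearMap.det_toMatrix, ← eq_inv_of_mul_eq_one_left hf.det_gram_mul_det]
  have htrace : N.trace = ∑ i, ⟪M (f i), f i⟫ := by
    simp only [Matrix.trace, Matrix.diag_apply, hN, gram_mul_toMatrix_apply, real_inner_comm]
  have hlog : log N.det ≤ N.trace - Fintype.card ι :=
    log_det_le_trace_sub_card (posSemidef_gram_mul_toMatrix f hM) (by rw [hdetN]; positivity)
  rw [hdetN, log_mul (inv_pos.2 hA).ne' hMdet.ne', log_inv, htrace] at hlog
  linarith

lemma isPositive_det_nonneg [FiniteDimensional ℝ E] {A : E →L[ℝ] E} (hA : A.IsPositive) :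
    0 ≤ A.det := by
  let b := stdOrthonormalBasis ℝ E
  have hpos := (LinearMap.posSemidef_toMatrix_iff b).2 (A.isPositive_toLinearMap_iff.2 hA)
  simpa [LinearMap.det_toMatrix] using hpos.det_nonneg

lemma exists_isOrthonormalFor [FiniteDimensional ℝ E] {A : E →L[ℝ] E} (hA : A.IsPositive)
    (hdet : A.det ≠ 0) : ∃ f : Basis (Fin (finrank ℝ E)) ℝ E, IsOrthonormalFor A f := by
  let b := hA.isSymmetric.eigenvectorBasis rfl
  let l := hA.isSymmetric.eigenvalues rfl
  have hAb : ∀ i, A (b i) = l i • b i := hA.isSymmetric.apply_eigenvectorBasis rfl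
  have hl : ∀ i, 0 < l i := by
    have hprod : A.det = ∏ i, l i := by simpa using hA.isSymmetric.det_eq_prod_eigenvalues rfl
    exact fun i => (LinearMap.IsPositive.nonneg_eigenvalues hA rfl i).lt_of_ne'
      (Finset.prod_ne_zero_iff.1 (hprod ▸ hdet) i (Finset.mem_univ i))
  have hsqrt : ∀ i, (√(l i))⁻¹ ≠ 0 := fun i => (inv_pos.2 (sqrt_pos.2 (hl i))).ne'
  refine ⟨b.toBasis.isUnitSMul fun i => (hsqrt i).isUnit, fun i j => ?_⟩
  simp only [Basis.isUnitSMul_apply, OrthonormalBasis.coe_toBasis, map_smul, hAb,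
    real_inner_smul_left, real_inner_smul_right, b.inner_eq_ite]
  split_ifs with hij
  · subst hij
    field_simp
    rw [sq_sqrt (hl i).le, div_self (hl i).ne']
  · simp

lemma eq_zero_of_inner_apply_self_eq_zero [FiniteDimensional ℝ E] {A : E →L[ℝ] E}
    (hA : A.IsPositive) (hdet : A.det ≠ 0) {v : E} (hv : ⟪A v, v⟫ = 0) : v = 0 := by
  obtain ⟨f, hf⟩ := exists_isOrthonormalFor hA hdet
  have hsum : ∑ i, ⟪A (f i), v⟫ ^ 2 = 0 := by
    rw [← hv, ← hf.sum_inner_mul_inner (A v) v]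
    refine Finset.sum_congr rfl fun i _ => ?_
    rw [hA.inner_left_eq_inner_right, real_inner_comm]
    ring
  have hzero := (Finset.sum_eq_zero_iff_of_nonneg fun i _ => sq_nonneg ⟪A (f i), v⟫).1 hsum
  refine f.ext_elem fun i => ?_
  rw [hf.repr_apply, map_zero, Finsupp.coe_zero, Pi.zero_apply]
  exact pow_eq_zero_iff two_ne_zero |>.1 (hzero i (Finset.mem_univ i))

end LinearAlgebra

section Calculus

lemma hasDerivAt_comp_line {E F : Type*} [NormedAddCommGroup E] [NormedSpace ℝ E]
    [NormedAddCommGroup F] [NormedSpace ℝ F] {f : E → F}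
    (hf : Differentiable ℝ f) (x v : E) (s : ℝ) :
    HasDerivAt (fun s : ℝ => f (x + s • v)) (fderiv ℝ f (x + s • v) v) s :=
  (hf (x + s • v)).hasFDerivAt.comp_hasDerivAt s
    (by simpa using ((hasDerivAt_id s).smul_const v).const_add x)

variable {E : Type*} [NormedAddCommGroup E] [InnerProductSpace ℝ E] [CompleteSpace E]

/-- The Hessian of `φ` at `x`, as an operator on the ambient Hilbert space. -/
abbrev hessian (φ : E → ℝ) (x : E) : E →L[ℝ] E :=
  fderiv ℝ (gradient φ) x

lemma contDiff_gradient {n : WithTop ℕ∞} {φ : E → ℝ} (hφ : ContDiff ℝ (n + 1) φ) :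
    ContDiff ℝ n (gradient φ) :=
  (InnerProductSpace.toDual ℝ E).symm.contDiff.comp (hφ.fderiv_right le_rfl)

lemma contDiff_hessian {n : WithTop ℕ∞} {φ : E → ℝ} (hφ : ContDiff ℝ (n + 2) φ) :
    ContDiff ℝ n (hessian φ) :=
  (contDiff_gradient (n := n + 1) (by rwa [add_assoc, one_add_one_eq_two])).fderiv_right le_rfl

lemma differentiable_gradient {φ : E → ℝ} (hφ : ContDiff ℝ 2 φ) :
    Differentiable ℝ (gradient φ) :=
  (contDiff_gradient (n := 1) (by rwa [one_add_one_eq_two])).differentiable one_ne_zero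

lemma continuous_gradient {φ : E → ℝ} (hφ : ContDiff ℝ 1 φ) : Continuous (gradient φ) :=
  (contDiff_gradient (n := 0) (by rwa [zero_add])).continuous

lemma inner_hessian {φ : E → ℝ} (hφ : ContDiff ℝ 2 φ) (x v w : E) :
    ⟪hessian φ x v, w⟫ = iteratedFDeriv ℝ 2 φ x ![v, w] := by
  have hdiff : DifferentiableAt ℝ (fderiv ℝ φ) x :=
    (hφ.fderiv_right (m := 1) (by norm_num)).differentiable one_ne_zero x
  have hfderiv : HasFDerivAt (gradient φ) _ x :=
    (InnerProductSpace.toDual ℝ E).symm.toContinuousLinearEquiv.hasFDerivAt.comp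
      x hdiff.hasFDerivAt
  rw [hessian, hfderiv.fderiv, iteratedFDeriv_two_apply]
  exact InnerProductSpace.toDual_symm_apply

lemma inner_hessian_comm {φ : E → ℝ} (hφ : ContDiff ℝ 2 φ) (x v w : E) :
    ⟪hessian φ x v, w⟫ = ⟪hessian φ x w, v⟫ := by
  rw [inner_hessian hφ, inner_hessian hφ, iteratedFDeriv_two_apply, iteratedFDeriv_two_apply]
  exact (hφ.contDiffAt.isSymmSndFDerivAt (by simp)).eq v w

lemma hasDerivAt_comp_line_gradient {φ : E → ℝ} (hφ : Differentiable ℝ φ) (x v : E) (s : ℝ) :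
    HasDerivAt (fun s : ℝ => φ (x + s • v)) ⟪gradient φ (x + s • v), v⟫ s := by
  rw [inner_gradient_left]
  exact hasDerivAt_comp_line hφ x v s

lemma hasDerivAt_inner_gradient_line {φ : E → ℝ} (hφ : ContDiff ℝ 2 φ) (x v w : E) (s : ℝ) :
    HasDerivAt (fun s : ℝ => ⟪gradient φ (x + s • v), w⟫) ⟪hessian φ (x + s • v) v, w⟫ s := by
  simpa using (hasDerivAt_comp_line (differentiable_gradient hφ) x v s).inner ℝ
    (hasDerivAt_const s w)

lemma hasDerivAt_hessian_line {φ : E → ℝ} (hφ : ContDiff ℝ 3 φ) (x u v : E) :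
    HasDerivAt (fun s : ℝ => hessian φ (x + s • u) v) (fderiv ℝ (hessian φ) x u v) 0 := by
  have hdiff : Differentiable ℝ (hessian φ) :=
    (contDiff_hessian (n := 1) (by convert hφ; norm_num)).differentiable one_ne_zero
  have hline := hasDerivAt_comp_line hdiff x u 0
  rw [zero_smul, add_zero] at hline
  simpa using hline.clm_apply (hasDerivAt_const (0 : ℝ) v)

lemma hasDerivAt_inner_hessian_line {φ : E → ℝ} (hφ : ContDiff ℝ 3 φ) (x u v w : E) :
    HasDerivAt (fun s : ℝ => ⟪hessian φ (x + s • u) v, w⟫) ⟪fderiv ℝ (hessian φ) x u v, w⟫ 0 := by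
  simpa using (hasDerivAt_hessian_line hφ x u v).inner ℝ (hasDerivAt_const (0 : ℝ) w)

lemma fderiv_hessian_comm {φ : E → ℝ} (hφ : ContDiff ℝ 3 φ) (x u v : E) :
    fderiv ℝ (hessian φ) x u v = fderiv ℝ (hessian φ) x v u :=
  ((contDiff_gradient (n := 2) (by convert hφ; norm_num)).contDiffAt.isSymmSndFDerivAt
    (by simp)).eq u v

lemma inner_fderiv_hessian_comm {φ : E → ℝ} (hφ : ContDiff ℝ 3 φ) (x u v w : E) :
    ⟪fderiv ℝ (hessian φ) x u v, w⟫ = ⟪fderiv ℝ (hessian φ) x u w, v⟫ := by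
  refine (hasDerivAt_inner_hessian_line hφ x u v w).unique ?_
  simpa only [inner_hessian_comm (hφ.of_le (by norm_num)) _ w v] using
    hasDerivAt_inner_hessian_line hφ x u w v

end Calculus

section Convexity

variable {E : Type*} [NormedAddCommGroup E] [InnerProductSpace ℝ E] [CompleteSpace E]
variable {φ : E → ℝ}

lemma add_inner_gradient_le (hφ : Differentiable ℝ φ) (hc : ConvexOn ℝ univ φ) (x z : E) :
    φ x + ⟪gradient φ x, z - x⟫ ≤ φ z := by
  have hline : ConvexOn ℝ univ (fun s : ℝ => φ (x + s • (z - x))) := by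
    simpa [Function.comp_def, AffineMap.lineMap_apply, add_comm] using
      hc.comp_affineMap (AffineMap.lineMap x z : ℝ →ᵃ[ℝ] E)
  have hslope := hline.le_slope_of_hasDerivAt (mem_univ 0) (mem_univ 1) one_pos
    (hasDerivAt_comp_line_gradient hφ x (z - x) 0)
  simp only [slope_def_field, zero_smul, add_zero, one_smul, sub_zero, div_one,
    add_sub_cancel] at hslope
  linarith

lemma inner_gradient_sub_nonneg (hφ : Differentiable ℝ φ) (hc : ConvexOn ℝ univ φ) (x z : E) :
    0 ≤ ⟪gradient φ z - gradient φ x, z - x⟫ := by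
  have hx := add_inner_gradient_le hφ hc x z
  have hz := add_inner_gradient_le hφ hc z x
  rw [← neg_sub z x, inner_neg_right] at hz
  rw [inner_sub_left]
  linarith

lemma monotone_inner_gradient_line (hφ : Differentiable ℝ φ) (hc : ConvexOn ℝ univ φ) (x v : E) :
    Monotone (fun s : ℝ => ⟪gradient φ (x + s • v), v⟫) := by
  intro s t hst
  rcases hst.eq_or_lt with rfl | hlt
  · rfl
  have hmono := inner_gradient_sub_nonneg hφ hc (x + s • v) (x + t • v)
  rw [add_sub_add_left_eq_sub, ← sub_smul, inner_smul_right, inner_sub_left] at hmono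
  exact sub_nonneg.1 (nonneg_of_mul_nonneg_right hmono (sub_pos.2 hlt))

lemma isPositive_hessian (hφ : ContDiff ℝ 2 φ) (hc : ConvexOn ℝ univ φ) (x : E) :
    (hessian φ x).IsPositive := by
  refine ContinuousLinearMap.isPositive_def.2 ⟨fun v w => ?_, fun v => ?_⟩
  · exact (inner_hessian_comm hφ x v w).trans (real_inner_comm _ _)
  · have hderiv := (hasDerivAt_inner_gradient_line hφ x v v 0).deriv
    have hmono := monotone_inner_gradient_line (hφ.differentiable two_ne_zero) hc x v
    have hnonneg := hmono.deriv_nonneg (x := 0)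
    rw [hderiv, zero_smul, add_zero] at hnonneg
    exact hnonneg

/-- The Bregman divergence of `V`: the gap between `V z` and the affine approximation of `V`
at `y`. -/
def bregmanDivergence (V : E → ℝ) (y z : E) : ℝ :=
  V z - V y - ⟪gradient V y, z - y⟫

lemma half_mul_le_bregmanDivergence {V : E → ℝ} (hV : ContDiff ℝ 2 V) {m : ℝ} (y z : E)
    (h : ∀ s ∈ Icc (0 : ℝ) 1, m ≤ ⟪hessian V (y + s • (z - y)) (z - y), z - y⟫) :
    m / 2 ≤ bregmanDivergence V y z := by
  set G : ℝ → ℝ := fun s => V (y + s • (z - y)) - m / 2 * s ^ 2 with hG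
  have hG' : ∀ s, HasDerivAt G (⟪gradient V (y + s • (z - y)), z - y⟫ - m * s) s := fun s => by
    have hsq := ((hasDerivAt_pow 2 s).const_mul (m / 2))
    exact ((hasDerivAt_comp_line_gradient (hV.differentiable two_ne_zero) y (z - y) s).sub
      hsq).congr_deriv (by norm_num; ring)
  have hG'' : ∀ s, HasDerivAt (fun s => ⟪gradient V (y + s • (z - y)), z - y⟫ - m * s)
      (⟪hessian V (y + s • (z - y)) (z - y), z - y⟫ - m) s := fun s =>
    ((hasDerivAt_inner_gradient_line hV y (z - y) (z - y) s).sub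
      ((hasDerivAt_id s).const_mul m)).congr_deriv (by simp)
  have hconvex : ConvexOn ℝ (Icc 0 1) G :=
    convexOn_of_hasDerivWithinAt2_nonneg (convex_Icc 0 1)
      (fun s _ => (hG' s).continuousAt.continuousWithinAt)
      (fun s _ => (hG' s).hasDerivWithinAt) (fun s _ => (hG'' s).hasDerivWithinAt)
      fun s hs => sub_nonneg.2 (h s (interior_subset hs))
  have hslope := hconvex.le_slope_of_hasDerivAt (left_mem_Icc.2 zero_le_one)
    (right_mem_Icc.2 zero_le_one) one_pos (hG' 0)
  simp only [slope_def_field, hG, zero_smul, add_zero, one_smul, sub_zero, div_one,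
    add_sub_cancel, mul_zero] at hslope
  rw [bregmanDivergence]
  linarith

lemma gradient_neg_eq (V : E → ℝ) : gradient (-V) = -gradient V := by
  ext1 x
  simp [gradient, fderiv_neg]

lemma hessian_neg (V : E → ℝ) (x : E) : hessian (-V) x = -hessian V x := by
  rw [hessian, gradient_neg_eq, fderiv_neg]

lemma bregmanDivergence_le {V : E → ℝ} (hV : ContDiff ℝ 2 V) {c : ℝ}
    (h : ∀ x v, ⟪hessian V x v, v⟫ ≤ c * ‖v‖ ^ 2) (y z : E) :
    bregmanDivergence V y z ≤ c / 2 * ‖z - y‖ ^ 2 := by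
  have hneg := half_mul_le_bregmanDivergence (V := -V) (m := -(c * ‖z - y‖ ^ 2)) hV.neg y z
      fun s _ => by
        rw [hessian_neg, neg_apply, inner_neg_left]
        exact neg_le_neg (h _ _)
  simp only [bregmanDivergence, gradient_neg_eq, Pi.neg_apply, inner_neg_left] at hneg ⊢
  linarith

lemma convexOn_of_hessian_nonneg {V : E → ℝ} (hV : ContDiff ℝ 2 V)
    (h : ∀ x v, 0 ≤ ⟪hessian V x v, v⟫) : ConvexOn ℝ univ V := by
  have htangent : ∀ y z, V y + ⟪gradient V y, z - y⟫ ≤ V z := fun y z => by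
    have hbreg := half_mul_le_bregmanDivergence hV (m := 0) y z fun s _ => h _ _
    rw [bregmanDivergence] at hbreg
    linarith
  refine ⟨convex_univ, fun x _ y _ a b ha hb hab => ?_⟩
  set z := a • x + b • y with hz
  have hbary : a * ⟪gradient V z, x - z⟫ + b * ⟪gradient V z, y - z⟫ = 0 := by
    have hzero : a • (x - z) + b • (y - z) = 0 := by
      rw [smul_sub, smul_sub, sub_add_sub_comm, ← hz, ← add_smul, hab, one_smul, sub_self]
    rw [← inner_smul_right, ← inner_smul_right, ← inner_add_right, hzero, inner_zero_right]
  calc V z = a * (V z + ⟪gradient V z, x - z⟫) + b * (V z + ⟪gradient V z, y - z⟫) := by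
        linear_combination -hbary - V z * hab
    _ ≤ a * V x + b * V y := by gcongr <;> exact htangent z _

/-- The second difference `φ(x + h) + φ(x - h) - 2φ(x)`, a discrete second derivative of `φ` along
the increment `h`. -/
def secondDifference {G : Type*} [AddGroup G] (φ : G → ℝ) (h x : G) : ℝ :=
  φ (x + h) + φ (x - h) - 2 * φ x

lemma secondDifference_le_inner (hφ : Differentiable ℝ φ) (hc : ConvexOn ℝ univ φ) (h x : E) :
    secondDifference φ h x ≤ ⟪gradient φ (x + h) - gradient φ (x - h), h⟫ := by
  have hplus := add_inner_gradient_le hφ hc (x + h) x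
  have hminus := add_inner_gradient_le hφ hc (x - h) x
  rw [sub_add_cancel_left, inner_neg_right] at hplus
  rw [sub_sub_cancel] at hminus
  rw [secondDifference, inner_sub_left]
  linarith

end Convexity

section Jets

/-- `G : ℝ → ℝ` is differentiable with `G'(0) = p` and `G''(0) = q`. -/
def HasSecondJetAtZero (G : ℝ → ℝ) (p q : ℝ) : Prop :=
  ∃ G' : ℝ → ℝ, (∀ s, HasDerivAt G (G' s) s) ∧ G' 0 = p ∧ HasDerivAt G' q 0

namespace HasSecondJetAtZero

variable {F G : ℝ → ℝ} {p q r t : ℝ}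

lemma add (hF : HasSecondJetAtZero F p q) (hG : HasSecondJetAtZero G r t) :
    HasSecondJetAtZero (fun s => F s + G s) (p + r) (q + t) := by
  obtain ⟨F', hF', rfl, hF''⟩ := hF
  obtain ⟨G', hG', rfl, hG''⟩ := hG
  exact ⟨fun s => F' s + G' s, fun s => (hF' s).add (hG' s), rfl, hF''.add hG''⟩

lemma sub (hF : HasSecondJetAtZero F p q) (hG : HasSecondJetAtZero G r t) :
    HasSecondJetAtZero (fun s => F s - G s) (p - r) (q - t) := by
  obtain ⟨F', hF', rfl, hF''⟩ := hF
  obtain ⟨G', hG', rfl, hG''⟩ := hG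
  exact ⟨fun s => F' s - G' s, fun s => (hF' s).sub (hG' s), rfl, hF''.sub hG''⟩

lemma const_mul (c : ℝ) (hF : HasSecondJetAtZero F p q) :
    HasSecondJetAtZero (fun s => c * F s) (c * p) (c * q) := by
  obtain ⟨F', hF', rfl, hF''⟩ := hF
  exact ⟨fun s => c * F' s, fun s => (hF' s).const_mul c, rfl, hF''.const_mul c⟩

lemma add_const (c : ℝ) (hF : HasSecondJetAtZero F p q) :
    HasSecondJetAtZero (fun s => F s + c) p q := by
  obtain ⟨F', hF', hp, hF''⟩ := hF
  exact ⟨F', fun s => (hF' s).add_const c, hp, hF''⟩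

lemma mul (hF : HasSecondJetAtZero F p q) (hG : HasSecondJetAtZero G r t) :
    HasSecondJetAtZero (fun s => F s * G s) (p * G 0 + F 0 * r)
      (q * G 0 + 2 * (p * r) + F 0 * t) := by
  obtain ⟨F', hF', rfl, hF''⟩ := hF
  obtain ⟨G', hG', rfl, hG''⟩ := hG
  refine ⟨fun s => F' s * G s + F s * G' s, fun s => (hF' s).mul (hG' s), rfl, ?_⟩
  exact ((hF''.mul (hG' 0)).add ((hF' 0).mul hG'')).congr_deriv (by ring)

lemma eq_zero_of_isLocalMax (hG : HasSecondJetAtZero G p q) (hmax : IsLocalMax G 0) : p = 0 := by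
  obtain ⟨G', hG', rfl, -⟩ := hG
  exact hmax.hasDerivAt_eq_zero (hG' 0)

lemma nonpos_of_isLocalMax (hG : HasSecondJetAtZero G p q) (hmax : IsLocalMax G 0) : q ≤ 0 := by
  obtain ⟨G', hG', -, hG''⟩ := hG
  by_contra! hq
  have hderiv : deriv G = G' := funext fun s => (hG' s).deriv
  have hmin : IsLocalMin G 0 := isLocalMin_of_deriv_deriv_pos (by rwa [hderiv, hG''.deriv])
    hmax.deriv_eq_zero (hG' 0).continuousAt
  have hconst : G =ᶠ[𝓝 0] fun _ => G 0 := by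
    filter_upwards [hmax, hmin] with s hle hge using le_antisymm hle hge
  have hzero := hconst.deriv.deriv.eq_of_nhds
  rw [hderiv, hG''.deriv] at hzero
  simp only [deriv_const', deriv_const] at hzero
  exact hq.ne' hzero

end HasSecondJetAtZero

variable {E : Type*} [NormedAddCommGroup E] [InnerProductSpace ℝ E] [CompleteSpace E]
variable {φ : E → ℝ}

lemma hasSecondJetAtZero_line (hφ : ContDiff ℝ 2 φ) (x e : E) :
    HasSecondJetAtZero (fun s => φ (x + s • e)) ⟪gradient φ x, e⟫ ⟪hessian φ x e, e⟫ :=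
  ⟨_, hasDerivAt_comp_line_gradient (hφ.differentiable two_ne_zero) x e, by simp,
    by simpa using hasDerivAt_inner_gradient_line hφ x e e 0⟩

lemma hasSecondJetAtZero_secondDifference_line (hφ : ContDiff ℝ 2 φ) (h x e : E) :
    HasSecondJetAtZero (fun s => secondDifference φ h (x + s • e))
      ⟪gradient φ (x + h) + gradient φ (x - h) - (2 : ℝ) • gradient φ x, e⟫
      (⟪hessian φ (x + h) e, e⟫ + ⟪hessian φ (x - h) e, e⟫ - 2 * ⟪hessian φ x e, e⟫) := by
  have hjet := ((hasSecondJetAtZero_line hφ (x + h) e).add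
    (hasSecondJetAtZero_line hφ (x - h) e)).sub ((hasSecondJetAtZero_line hφ x e).const_mul 2)
  simpa only [secondDifference, inner_sub_left, inner_add_left, real_inner_smul_left,
    add_right_comm, sub_add_eq_add_sub] using hjet

/-- The convex conjugate of `φ` evaluated at `∇φ(x)`, namely `φ*(∇φ(x)) = ⟪x, ∇φ(x)⟫ - φ(x)`. -/
def dualPotential (φ : E → ℝ) (x : E) : ℝ :=
  ⟪x, gradient φ x⟫ - φ x

lemma hasSecondJetAtZero_dualPotential_line (hφ : ContDiff ℝ 3 φ) (x e : E) :
    HasSecondJetAtZero (fun s => dualPotential φ (x + s • e)) ⟪hessian φ x x, e⟫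
      (⟪hessian φ x e, e⟫ + ⟪fderiv ℝ (hessian φ) x x e, e⟫) := by
  have hφ₂ : ContDiff ℝ 2 φ := hφ.of_le (by norm_num)
  have hline : ∀ s : ℝ, HasDerivAt (fun s : ℝ => x + s • e) e s := fun s => by
    simpa using ((hasDerivAt_id s).smul_const e).const_add x
  refine ⟨fun s => ⟪x + s • e, hessian φ (x + s • e) e⟫, fun s => ?_, ?_, ?_⟩
  · have hgrad := hasDerivAt_comp_line (differentiable_gradient hφ₂) x e s
    have hphi := hasDerivAt_comp_line_gradient (hφ₂.differentiable two_ne_zero) x e s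
    exact (((hline s).inner ℝ hgrad).sub hphi).congr_deriv (by rw [real_inner_comm e]; ring)
  · simp only [zero_smul, add_zero]
    rw [real_inner_comm, inner_hessian_comm hφ₂]
  · refine ((hline 0).inner ℝ (hasDerivAt_hessian_line hφ x e e)).congr_deriv ?_
    simp only [zero_smul, add_zero]
    rw [real_inner_comm _ x, inner_fderiv_hessian_comm hφ, fderiv_hessian_comm hφ,
      real_inner_comm _ e, add_comm]

lemma inner_hessian_le_of_secondDifference_le (hφ : ContDiff ℝ 2 φ) (x v : E) {m : ℝ}
    (h : ∀ᶠ u in 𝓝 0, secondDifference φ u x ≤ m * ‖u‖ ^ 2) :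
    ⟪hessian φ x v, v⟫ ≤ m * ‖v‖ ^ 2 := by
  have hsquare : HasSecondJetAtZero (fun s => s ^ 2) 0 2 :=
    ⟨fun s => 2 * s, fun s => by simpa using hasDerivAt_pow 2 s, by simp,
      by simpa using (hasDerivAt_id (0 : ℝ)).const_mul 2⟩
  have hjet := ((hasSecondJetAtZero_line hφ x v).add (hasSecondJetAtZero_line hφ x (-v))).sub
    (hsquare.const_mul (m * ‖v‖ ^ 2))
  have htendsto : Tendsto (fun s : ℝ => s • v) (𝓝 0) (𝓝 0) :=
    (by fun_prop : Continuous fun s : ℝ => s • v).tendsto' 0 0 (zero_smul ℝ v)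
  have hnonpos := hjet.nonpos_of_isLocalMax <| by
    filter_upwards [htendsto.eventually h] with s hs
    simp only [secondDifference, norm_smul, mul_pow, norm_eq_abs, sq_abs] at hs
    simp only [smul_neg, ← sub_eq_add_neg, zero_smul, add_zero, sub_zero]
    linarith
  simp only [map_neg, inner_neg_neg] at hnonpos
  linarith

end Jets

section MaximumPrinciple

lemma isLocalMax_line {E : Type*} [AddCommGroup E] [Module ℝ E] {F : E → ℝ} {x : E}
    (hmax : ∀ z, F z ≤ F x) (e : E) : IsLocalMax (fun s : ℝ => F (x + s • e)) 0 :=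
  Eventually.of_forall fun s => by simpa using hmax (x + s • e)

variable {E : Type*} [NormedAddCommGroup E] [InnerProductSpace ℝ E] [CompleteSpace E]
variable {φ V : E → ℝ}

/-- `φ` solves, with additive constant `κ`, the Monge–Ampère equation satisfied by the potential of
the optimal transport of the standard Gaussian onto `exp (-V)`, in logarithmic form. -/
structure IsMongeAmpereSolution (φ V : E → ℝ) (κ : ℝ) : Prop where
  det_pos : ∀ x, 0 < (hessian φ x).det
  log_det : ∀ x, log (hessian φ x).det = κ - ‖x‖ ^ 2 / 2 + V (gradient φ x)

variable {κ : ℝ} {ι : Type*} [Fintype ι] [DecidableEq ι] {f : Basis ι ℝ E} {x : E}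

lemma IsMongeAmpereSolution.le_add_sum_inner_hessian (hMA : IsMongeAmpereSolution φ V κ)
    (hφ : ContDiff ℝ 2 φ) (hc : ConvexOn ℝ univ φ) (hf : IsOrthonormalFor (hessian φ x) f) (z : E) :
    V (gradient φ z) - ‖z‖ ^ 2 / 2 ≤ V (gradient φ x) - ‖x‖ ^ 2 / 2
      + ∑ i, ⟪hessian φ z (f i), f i⟫ - Fintype.card ι := by
  have hconcave :=
    hf.log_det_le (hMA.det_pos x) (isPositive_hessian hφ hc z) (hMA.det_pos z)
  rw [hMA.log_det, hMA.log_det] at hconcave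
  linarith

/-- The Monge–Ampère equation differentiated along `u`: the function bounded from above in
`IsMongeAmpereSolution.le_add_sum_inner_hessian` touches its bound at `z = x`. -/
lemma IsMongeAmpereSolution.sum_inner_fderiv_hessian (hMA : IsMongeAmpereSolution φ V κ)
    (hV : Differentiable ℝ V) (hφ : ContDiff ℝ 3 φ) (hc : ConvexOn ℝ univ φ)
    (hf : IsOrthonormalFor (hessian φ x) f) (u : E) :
    ∑ i, ⟪fderiv ℝ (hessian φ) x u (f i), f i⟫ =
      ⟪gradient V (gradient φ x), hessian φ x u⟫ - ⟪x, u⟫ := by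
  have hφ₂ : ContDiff ℝ 2 φ := hφ.of_le (by norm_num)
  let gap : ℝ → ℝ := fun s => V (gradient φ (x + s • u)) - ‖x + s • u‖ ^ 2 / 2
    - ∑ i, ⟪hessian φ (x + s • u) (f i), f i⟫
  have hmax : IsLocalMax gap 0 := Eventually.of_forall fun s => by
    have hle := hMA.le_add_sum_inner_hessian hφ₂ hc hf (x + s • u)
    simp only [gap, zero_smul, add_zero, hf.sum_inner_apply_self]
    linarith
  have hVline : HasDerivAt (fun s : ℝ => V (gradient φ (x + s • u)))
      ⟪gradient V (gradient φ x), hessian φ x u⟫ 0 := by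
    have hgrad := hasDerivAt_comp_line (differentiable_gradient hφ₂) x u 0
    rw [inner_gradient_left]
    rw [zero_smul, add_zero] at hgrad
    exact HasFDerivAt.comp_hasDerivAt (0 : ℝ) (by simpa using (hV (gradient φ x)).hasFDerivAt) hgrad
  have hnorm : HasDerivAt (fun s : ℝ => ‖x + s • u‖ ^ 2 / 2) ⟪x, u⟫ 0 := by
    have hline : HasDerivAt (fun s : ℝ => x + s • u) u 0 := by
      simpa using ((hasDerivAt_id (0 : ℝ)).smul_const u).const_add x
    simpa using hline.norm_sq.div_const 2
  have hderiv : HasDerivAt gap _ 0 := (hVline.sub hnorm).sub <|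
    HasDerivAt.fun_sum fun i _ => hasDerivAt_inner_hessian_line hφ x u (f i) (f i)
  linarith [hmax.hasDerivAt_eq_zero hderiv]

/-- The function to which the maximum principle is applied: the second difference of `φ` minus the
barrier `α (φ*(∇φ) + B)`, with a perturbation of size `ε` forcing the maximum to be attained. -/
def penalizedSecondDifference (φ : E → ℝ) (h : E) (α ε β B : ℝ) (z : E) : ℝ :=
  secondDifference φ h z - (ε * (φ z + β) + α) * (dualPotential φ z + B)

variable {h : E} {α ε β B : ℝ}

lemma hasSecondJetAtZero_penalizedSecondDifference_line (hφ : ContDiff ℝ 3 φ) (x e : E) :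
    HasSecondJetAtZero (fun s => penalizedSecondDifference φ h α ε β B (x + s • e))
      (⟪gradient φ (x + h) + gradient φ (x - h) - (2 : ℝ) • gradient φ x, e⟫
        - (ε * ⟪gradient φ x, e⟫ * (dualPotential φ x + B)
          + (ε * (φ x + β) + α) * ⟪hessian φ x x, e⟫))
      (⟪hessian φ (x + h) e, e⟫ + ⟪hessian φ (x - h) e, e⟫ - 2 * ⟪hessian φ x e, e⟫
        - (ε * ⟪hessian φ x e, e⟫ * (dualPotential φ x + B)
          + 2 * (ε * ⟪gradient φ x, e⟫ * ⟪hessian φ x x, e⟫)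
          + (ε * (φ x + β) + α) * (⟪hessian φ x e, e⟫ + ⟪fderiv ℝ (hessian φ) x x e, e⟫))) := by
  have hφ₂ : ContDiff ℝ 2 φ := hφ.of_le (by norm_num)
  have hpert := (((hasSecondJetAtZero_line hφ₂ x e).add_const β).const_mul ε).add_const α
  have hdual := (hasSecondJetAtZero_dualPotential_line hφ x e).add_const B
  simpa only [penalizedSecondDifference, zero_smul, add_zero] using
    (hasSecondJetAtZero_secondDifference_line hφ₂ h x e).sub (hpert.mul hdual)

lemma gradient_secondDifference_eq_of_max (hφ : ContDiff ℝ 3 φ)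
    (hmax : ∀ z, penalizedSecondDifference φ h α ε β B z
      ≤ penalizedSecondDifference φ h α ε β B x) :
    gradient φ (x + h) + gradient φ (x - h) - (2 : ℝ) • gradient φ x =
      (ε * (dualPotential φ x + B)) • gradient φ x
        + (ε * (φ x + β) + α) • hessian φ x x := by
  refine ext_inner_right ℝ fun e => ?_
  have hzero := (hasSecondJetAtZero_penalizedSecondDifference_line hφ x e).eq_zero_of_isLocalMax
    (isLocalMax_line hmax e)
  rw [inner_add_left, real_inner_smul_left, real_inner_smul_left]
  linarith

lemma IsMongeAmpereSolution.sum_inner_hessian_le_of_max (hMA : IsMongeAmpereSolution φ V κ)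
    (hV : Differentiable ℝ V) (hφ : ContDiff ℝ 3 φ) (hc : ConvexOn ℝ univ φ)
    (hf : IsOrthonormalFor (hessian φ x) f)
    (hmax : ∀ z, penalizedSecondDifference φ h α ε β B z
      ≤ penalizedSecondDifference φ h α ε β B x) :
    ∑ i, ⟪hessian φ (x + h) (f i), f i⟫ + ∑ i, ⟪hessian φ (x - h) (f i), f i⟫
        - 2 * Fintype.card ι
      ≤ ε * (dualPotential φ x + B) * Fintype.card ι + 2 * ε * ⟪gradient φ x, x⟫
        + (ε * (φ x + β) + α) * (Fintype.card ι
          + (⟪gradient V (gradient φ x), hessian φ x x⟫ - ‖x‖ ^ 2)) := by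
  have hφ₂ : ContDiff ℝ 2 φ := hφ.of_le (by norm_num)
  have hgrad : ∑ i, ⟪gradient φ x, f i⟫ * ⟪hessian φ x x, f i⟫ = ⟪gradient φ x, x⟫ := by
    simpa only [inner_hessian_comm hφ₂ x _ x] using hf.sum_inner_mul_inner (gradient φ x) x
  have htrace := hMA.sum_inner_fderiv_hessian hV hφ hc hf x
  rw [real_inner_self_eq_norm_sq] at htrace
  have hsum := Finset.sum_nonpos fun i (_ : i ∈ Finset.univ) =>
    (hasSecondJetAtZero_penalizedSecondDifference_line hφ x (f i)).nonpos_of_isLocalMax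
      (isLocalMax_line hmax (f i))
  simp only [Finset.sum_sub_distrib, Finset.sum_add_distrib, mul_assoc, ← Finset.mul_sum,
    ← Finset.sum_mul, hf.sum_inner_apply_self, hgrad, htrace] at hsum
  linarith

lemma IsMongeAmpereSolution.bregmanDivergence_add_le_of_max [FiniteDimensional ℝ E]
    (hMA : IsMongeAmpereSolution φ V κ)
    (hV : Differentiable ℝ V) (hφ : ContDiff ℝ 3 φ) (hc : ConvexOn ℝ univ φ)
    (hmax : ∀ z, penalizedSecondDifference φ h α ε β B z
      ≤ penalizedSecondDifference φ h α ε β B x) :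
    bregmanDivergence V (gradient φ x) (gradient φ (x + h))
        + bregmanDivergence V (gradient φ x) (gradient φ (x - h))
      ≤ ‖h‖ ^ 2 + α * (finrank ℝ E - ‖x‖ ^ 2)
        + ε * ((φ x + β) * (finrank ℝ E - ‖x‖ ^ 2) + (dualPotential φ x + B)
          * (finrank ℝ E - ⟪gradient V (gradient φ x), gradient φ x⟫)
          + 2 * ⟪gradient φ x, x⟫) := by
  have hφ₂ : ContDiff ℝ 2 φ := hφ.of_le (by norm_num)
  obtain ⟨f, hf⟩ := exists_isOrthonormalFor (isPositive_hessian hφ₂ hc x) (hMA.det_pos x).ne'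
  have hplus := hMA.le_add_sum_inner_hessian hφ₂ hc hf (x + h)
  have hminus := hMA.le_add_sum_inner_hessian hφ₂ hc hf (x - h)
  have hsecond := hMA.sum_inner_hessian_le_of_max hV hφ hc hf hmax
  have hfirst := congrArg (⟪gradient V (gradient φ x), ·⟫)
    (gradient_secondDifference_eq_of_max hφ hmax)
  have hparallelogram := parallelogram_law_with_norm ℝ x h
  simp only [inner_sub_right, inner_add_right, real_inner_smul_right] at hfirst
  simp only [bregmanDivergence, inner_sub_right, Fintype.card_fin] at *
  linarith

end MaximumPrinciple

section MongeAmpere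

variable {E : Type*} [NormedAddCommGroup E] [InnerProductSpace ℝ E] [FiniteDimensional ℝ E]
  {φ : E → ℝ}

lemma eq_of_gradient_eq_of_det_hessian_ne_zero (hφ : ContDiff ℝ 2 φ) (hc : ConvexOn ℝ univ φ)
    {x y : E} (hy : (hessian φ y).det ≠ 0) (h : gradient φ x = gradient φ y) : x = y := by
  have hmono := monotone_inner_gradient_line (hφ.differentiable two_ne_zero) hc y (x - y)
  have hconst : ∀ s ∈ Icc (0 : ℝ) 1, ⟪gradient φ (y + s • (x - y)), x - y⟫
      = ⟪gradient φ y, x - y⟫ := fun s hs => by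
    have hleft := hmono hs.1
    have hright := hmono hs.2
    simp only [zero_smul, add_zero, one_smul, add_sub_cancel, h] at hleft hright
    exact le_antisymm hright hleft
  have hderiv := hasDerivAt_inner_gradient_line hφ y (x - y) (x - y) 0
  rw [zero_smul, add_zero] at hderiv
  have hzero : ⟪hessian φ y (x - y), x - y⟫ = 0 :=
    (uniqueDiffOn_Icc zero_lt_one 0 (left_mem_Icc.2 zero_le_one)).eq_deriv _
      hderiv.hasDerivWithinAt <|
      (hasDerivWithinAt_const (0 : ℝ) (Icc (0 : ℝ) 1) ⟪gradient φ y, x - y⟫).congr_of_mem hconst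
        (left_mem_Icc.2 zero_le_one)
  exact sub_eq_zero.1 (eq_zero_of_inner_apply_self_eq_zero (isPositive_hessian hφ hc y) hy hzero)

variable [MeasurableSpace E] [BorelSpace E] {μ : Measure E} [μ.IsAddHaarMeasure] {ρ σ : E → ℝ}

lemma measure_det_hessian_eq_zero (hφ : ContDiff ℝ 2 φ) (hρ : Continuous ρ) (hρpos : ∀ x, 0 < ρ x)
    {ν : Measure E} (hν : ν ≪ μ)
    (hmap : Measure.map (gradient φ) (μ.withDensity fun x => ENNReal.ofReal (ρ x)) = ν) :
    μ {x | (hessian φ x).det = 0} = 0 := by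
  have hsard : μ (gradient φ '' {x | (hessian φ x).det = 0}) = 0 :=
    addHaar_image_eq_zero_of_det_fderivWithin_eq_zero μ
      (fun x _ => (differentiable_gradient hφ x).hasFDerivAt.hasFDerivWithinAt) fun _ hx => hx
  refine withDensity_absolutelyContinuous' (f := fun x => ENNReal.ofReal (ρ x))
    hρ.measurable.ennreal_ofReal.aemeasurable
    (Eventually.of_forall fun x => by simpa using hρpos x) (le_antisymm ?_ zero_le)
  calc _ ≤ Measure.map (gradient φ) (μ.withDensity fun x => ENNReal.ofReal (ρ x))
        (gradient φ '' {x | (hessian φ x).det = 0}) :=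
      Measure.le_map_apply_image (differentiable_gradient hφ).continuous.measurable.aemeasurable _
    _ = 0 := by rw [hmap]; exact hν hsard

lemma setLIntegral_det_hessian_mul (hφ : ContDiff ℝ 2 φ) (hc : ConvexOn ℝ univ φ)
    {f g : E → ℝ≥0∞} (hmap : Measure.map (gradient φ) (μ.withDensity f) = μ.withDensity g)
    {s : Set E} (hs : MeasurableSet s) (hdet : ∀ x ∈ s, (hessian φ x).det ≠ 0) :
    ∫⁻ x in s, ENNReal.ofReal |(hessian φ x).det| * g (gradient φ x) ∂μ = ∫⁻ x in s, f x ∂μ := by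
  have hinj : InjOn (gradient φ) s := fun _ _ y hy hxy =>
    eq_of_gradient_eq_of_det_hessian_ne_zero hφ hc (hdet y hy) hxy
  have hpre : gradient φ ⁻¹' (gradient φ '' s) = s :=
    Subset.antisymm (fun z ⟨a, ha, haz⟩ =>
      eq_of_gradient_eq_of_det_hessian_ne_zero hφ hc (hdet a ha) haz.symm ▸ ha)
      (subset_preimage_image _ _)
  have hderiv : ∀ x ∈ s, HasFDerivWithinAt (gradient φ) (hessian φ x) s x := fun x _ =>
    (differentiable_gradient hφ x).hasFDerivAt.hasFDerivWithinAt
  have himage : MeasurableSet (gradient φ '' s) := measurable_image_of_fderivWithin hs hderiv hinj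
  rw [← lintegral_image_eq_lintegral_abs_det_fderiv_mul μ hs hderiv hinj,
    ← withDensity_apply _ himage, ← hmap,
    Measure.map_apply (differentiable_gradient hφ).continuous.measurable himage, hpre,
    withDensity_apply _ hs]

lemma det_hessian_mul_eq (hφ : ContDiff ℝ 2 φ) (hc : ConvexOn ℝ univ φ)
    (hρ : Continuous ρ) (hρpos : ∀ x, 0 < ρ x) (hσ : Continuous σ) (hσpos : ∀ x, 0 ≤ σ x)
    (hmap : Measure.map (gradient φ) (μ.withDensity fun x => ENNReal.ofReal (ρ x)) =
      μ.withDensity fun x => ENNReal.ofReal (σ x)) (x : E) :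
    (hessian φ x).det * σ (gradient φ x) = ρ x := by
  have hgrad : Continuous (gradient φ) := (differentiable_gradient hφ).continuous
  have hdet : Continuous fun x => (hessian φ x).det :=
    ContinuousLinearMap.continuous_det.comp (contDiff_hessian (n := 0) hφ).continuous
  have hdetpos := fun x => isPositive_det_nonneg (isPositive_hessian hφ hc x)
  have hcrit := measure_det_hessian_eq_zero hφ hρ hρpos (withDensity_absolutelyContinuous _ _) hmap
  have hae : (fun x => ENNReal.ofReal |(hessian φ x).det| * ENNReal.ofReal (σ (gradient φ x)))
      =ᵐ[μ] fun x => ENNReal.ofReal (ρ x) := by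
    refine ae_eq_of_forall_setLIntegral_eq_of_sigmaFinite
      (hdet.abs.measurable.ennreal_ofReal.mul (by fun_prop)) (by fun_prop) fun s hs _ => ?_
    have hdiff : (s \ {x | (hessian φ x).det = 0} : Set E) =ᵐ[μ] s := sdiff_null_ae_eq_self hcrit
    rw [← setLIntegral_congr hdiff, ← setLIntegral_congr hdiff]
    exact setLIntegral_det_hessian_mul hφ hc hmap
      (hs.diff (isClosed_eq hdet continuous_const).measurableSet) fun _ hx => hx.2
  refine congrFun ((Continuous.ae_eq_iff_eq μ (hdet.mul (hσ.comp hgrad)) hρ).1 ?_) x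
  filter_upwards [hae] with x hx
  rw [abs_of_nonneg (hdetpos x), ← ENNReal.ofReal_mul (hdetpos x)] at hx
  exact (ENNReal.ofReal_eq_ofReal_iff (mul_nonneg (hdetpos x) (hσpos _)) (hρpos x).le).1 hx

end MongeAmpere

section Gibbs

variable {d : ℕ} {V φ : EuclideanSpace ℝ (Fin d) → ℝ}

/-- The measure `e^{-V} dx` on `ℝ^d`. -/
abbrev gibbsMeasure (V : EuclideanSpace ℝ (Fin d) → ℝ) : Measure (EuclideanSpace ℝ (Fin d)) :=
  volume.withDensity fun x => ENNReal.ofReal (exp (-V x))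

lemma exists_isMongeAmpereSolution (hV : Continuous V) (hφ : ContDiff ℝ 2 φ)
    (hbr : IsBrenierPotential φ (gibbsMeasure V)) : ∃ κ, IsMongeAmpereSolution φ V κ := by
  have hMA := det_hessian_mul_eq hφ hbr.1 (by fun_prop) (fun x => by positivity)
    (by fun_prop : Continuous fun x => exp (-V x)) (fun x => (exp_pos _).le) hbr.2.2
  have hconst : (0 : ℝ) < (2 * π) ^ (-(d : ℝ) / 2) := by positivity
  have hdet : ∀ x, 0 < (hessian φ x).det := fun x =>
    pos_of_mul_pos_left (by rw [hMA]; positivity) (exp_pos (-V (gradient φ x))).le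
  refine ⟨log ((2 * π) ^ (-(d : ℝ) / 2)), hdet, fun x => ?_⟩
  have hlog := congrArg log (hMA x)
  rw [log_mul (hdet x).ne' (exp_pos _).ne', log_mul hconst.ne' (exp_pos _).ne', log_exp,
    log_exp] at hlog
  linarith

end Gibbs

section LogConcave

lemma measurableSet_norm_ge {E : Type*} [NormedAddCommGroup E] [MeasurableSpace E]
    [OpensMeasurableSpace E] (t : ℝ) : MeasurableSet {y : E | t ≤ ‖y‖} :=
  (isClosed_le continuous_const continuous_norm).measurableSet

lemma setLIntegral_image_smul_add {E : Type*} [NormedAddCommGroup E] [NormedSpace ℝ E]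
    [FiniteDimensional ℝ E] [MeasurableSpace E] [BorelSpace E] (μ : Measure E)
    [μ.IsAddHaarMeasure] {a : ℝ} (ha : a ≠ 0) (c : E) {s : Set E} (hs : MeasurableSet s)
    (F : E → ℝ≥0∞) :
    ∫⁻ x in (fun z => a • z + c) '' s, F x ∂μ =
      ENNReal.ofReal (|a| ^ finrank ℝ E) * ∫⁻ z in s, F (a • z + c) ∂μ := by
  have hderiv : ∀ x ∈ s, HasFDerivWithinAt (fun z : E => a • z + c)
      (a • ContinuousLinearMap.id ℝ E) s x := fun x _ =>
    (((hasFDerivAt_id x).const_smul a).add_const c).hasFDerivWithinAt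
  have hinj : InjOn (fun z : E => a • z + c) s := fun x _ y _ h =>
    smul_right_injective _ ha (add_right_cancel h)
  have hdet : (a • ContinuousLinearMap.id ℝ E).det = a ^ finrank ℝ E := by
    simp [ContinuousLinearMap.det]
  rw [lintegral_image_eq_lintegral_abs_det_fderiv_mul μ hs hderiv hinj, hdet, abs_pow,
    lintegral_const_mul' _ _ ENNReal.ofReal_ne_top]

variable {d : ℕ} {V : EuclideanSpace ℝ (Fin d) → ℝ}

lemma gibbsMeasure_image_smul_add {a : ℝ} (ha : 0 < a) (c : EuclideanSpace ℝ (Fin d))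
    {s : Set (EuclideanSpace ℝ (Fin d))} (hs : MeasurableSet s) :
    gibbsMeasure V ((fun z => a • z + c) '' s) =
      ENNReal.ofReal (a ^ d) * gibbsMeasure (fun z => V (a • z + c)) s := by
  have himage : MeasurableSet ((fun z => a • z + c) '' s) :=
    (((Homeomorph.smulOfNeZero a ha.ne').trans
      (Homeomorph.addRight c)).measurableEmbedding.measurableSet_image).2 hs
  rw [withDensity_apply _ himage, withDensity_apply _ hs,
    setLIntegral_image_smul_add volume ha.ne' c hs, abs_of_pos ha, finrank_euclideanSpace_fin]

lemma gibbsMeasure_le_ofReal_exp_mul {W : EuclideanSpace ℝ (Fin d) → ℝ} {t : ℝ}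
    {s : Set (EuclideanSpace ℝ (Fin d))} (hs : MeasurableSet s) (h : ∀ z ∈ s, W z ≤ V z + t) :
    gibbsMeasure V s ≤ ENNReal.ofReal (exp t) * gibbsMeasure W s := by
  rw [withDensity_apply _ hs, withDensity_apply _ hs,
    ← lintegral_const_mul' _ _ ENNReal.ofReal_ne_top]
  refine setLIntegral_mono' hs fun z hz => ?_
  rw [← ENNReal.ofReal_mul (exp_pos _).le, ← exp_add]
  exact ENNReal.ofReal_le_ofReal (exp_le_exp.2 (by linarith [h z hz]))

namespace IsIsotropic

variable {μ : Measure (EuclideanSpace ℝ (Fin d))}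

lemma integrable_norm_sq (hiso : IsIsotropic μ) : Integrable (fun x => ‖x‖ ^ 2) μ := by
  simp_rw [EuclideanSpace.real_norm_sq_eq, sq]
  exact integrable_finsetSum _ fun i _ => integrable_of_integral_eq_one (by simpa using hiso i i)

lemma integral_norm_sq (hiso : IsIsotropic μ) : ∫ x, ‖x‖ ^ 2 ∂μ = d := by
  simp_rw [EuclideanSpace.real_norm_sq_eq, sq]
  rw [integral_finsetSum _ fun i _ => integrable_of_integral_eq_one (by simpa using hiso i i)]
  simp [fun i => hiso i i]

lemma measureReal_norm_ge_le (hiso : IsIsotropic μ) (hd : 0 < d) {k : ℝ} (hk : 0 < k) :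
    μ.real {y | k * √d ≤ ‖y‖} ≤ 1 / k ^ 2 := by
  have hd' : (0 : ℝ) < d := Nat.cast_pos.2 hd
  have hmarkov := mul_meas_ge_le_integral_of_nonneg
    (Eventually.of_forall fun x => sq_nonneg ‖x‖) hiso.integrable_norm_sq ((k * √d) ^ 2)
  simp only [pow_le_pow_iff_left₀ (show 0 ≤ k * √d by positivity) (norm_nonneg _) two_ne_zero]
    at hmarkov
  rw [hiso.integral_norm_sq, mul_pow, sq_sqrt hd'.le] at hmarkov
  rw [le_div_iff₀ (by positivity)]
  exact le_of_mul_le_mul_right (by linarith) hd'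

lemma three_fourths_le_measureReal_closedBall [IsProbabilityMeasure μ] (hiso : IsIsotropic μ)
    (hd : 0 < d) : 3 / 4 ≤ μ.real (Metric.closedBall 0 (2 * √d)) := by
  have hcompl : μ.real (Metric.closedBall 0 (2 * √d))ᶜ ≤ 1 / 2 ^ 2 :=
    (measureReal_mono fun y hy => by simpa using (not_le.1 (by simpa using hy)).le).trans
      (hiso.measureReal_norm_ge_le hd two_pos)
  rw [probReal_compl_eq_one_sub Metric.isClosed_closedBall.measurableSet] at hcompl
  linarith

end IsIsotropic

lemma pow_mul_exp_mul_gibbsMeasure_le (hc : ConvexOn ℝ univ V) {l m : ℝ} (hl : 0 ≤ l) (hl' : l < 1)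
    (y : EuclideanSpace ℝ (Fin d)) {s : Set (EuclideanSpace ℝ (Fin d))} (hs : MeasurableSet s)
    (hm : ∀ z ∈ s, m ≤ V z) :
    ENNReal.ofReal ((1 - l) ^ d * exp (l * (m - V y))) * gibbsMeasure V s ≤
      gibbsMeasure V ((fun z => (1 - l) • z + l • y) '' s) := by
  have hl1 : 0 < 1 - l := sub_pos.2 hl'
  have hconv : ∀ z ∈ s, V ((1 - l) • z + l • y) ≤ V z + l * (V y - m) := fun z hz => by
    have hVz := hc.2 (mem_univ z) (mem_univ y) hl1.le hl (by ring)
    have hlz := mul_le_mul_of_nonneg_left (hm z hz) hl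
    simp only [smul_eq_mul] at hVz
    linarith
  rw [gibbsMeasure_image_smul_add hl1 _ hs, ENNReal.ofReal_mul (by positivity), mul_assoc]
  gcongr
  calc _ ≤ ENNReal.ofReal (exp (l * (m - V y))) * (ENNReal.ofReal (exp (l * (V y - m))) *
        gibbsMeasure (fun z => V ((1 - l) • z + l • y)) s) := by
        gcongr; exact gibbsMeasure_le_ofReal_exp_mul hs hconv
    _ = _ := by
      rw [← mul_assoc, ← ENNReal.ofReal_mul (exp_pos _).le, ← exp_add, ← mul_add]
      simp

variable [IsProbabilityMeasure (gibbsMeasure V)]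

lemma measureReal_image_smul_add_closedBall_le (hiso : IsIsotropic (gibbsMeasure V)) (hd : 0 < d)
    {l : ℝ} (hl : 0 ≤ l) (hl' : l ≤ 1) {y : EuclideanSpace ℝ (Fin d)} (hy : 5 * √d ≤ l * ‖y‖) :
    (gibbsMeasure V).real ((fun z => (1 - l) • z + l • y) '' Metric.closedBall 0 (2 * √d)) ≤
      1 / 9 := by
  have hfar : (fun z => (1 - l) • z + l • y) '' Metric.closedBall 0 (2 * √d)
      ⊆ {x | 3 * √d ≤ ‖x‖} := by
    rintro _ ⟨z, hz, rfl⟩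
    rw [mem_closedBall_zero_iff] at hz
    have htri := norm_sub_le ((1 - l) • z + l • y) ((1 - l) • z)
    rw [add_sub_cancel_left, norm_smul, norm_smul, norm_of_nonneg hl,
      norm_of_nonneg (sub_nonneg.2 hl')] at htri
    have hlz := mul_nonneg hl (norm_nonneg z)
    rw [mem_ofPred_eq]
    linarith
  exact (measureReal_mono hfar).trans <|
    (hiso.measureReal_norm_ge_le hd three_pos).trans (by norm_num)

lemma exp_mul_sub_le_of_isIsotropic (hd : 0 < d) (hc : ConvexOn ℝ univ V)
    (hiso : IsIsotropic (gibbsMeasure V)) {l m : ℝ} (hl : 0 ≤ l) (hld : l * d ≤ 1 / 2)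
    {y : EuclideanSpace ℝ (Fin d)} (hy : 5 * √d ≤ l * ‖y‖)
    (hm : ∀ z ∈ Metric.closedBall 0 (2 * √d), m ≤ V z) : exp (l * (m - V y)) ≤ exp (-1) := by
  have hd' : (1 : ℝ) ≤ d := Nat.one_le_cast.2 hd
  have hl₁ : l ≤ 1 / 2 := by nlinarith
  have hbernoulli : 1 / 2 ≤ (1 - l) ^ d := by
    have hb := one_add_mul_le_pow (a := -l) (by linarith) d
    rw [← sub_eq_add_neg] at hb
    linarith
  have hlow := ENNReal.toReal_mono (measure_ne_top _ _) <| pow_mul_exp_mul_gibbsMeasure_le hc hl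
    (hl₁.trans_lt one_half_lt_one) y Metric.isClosed_closedBall.measurableSet hm
  rw [ENNReal.toReal_mul, ENNReal.toReal_ofReal (by positivity)] at hlow
  have hchain : 1 / 2 * exp (l * (m - V y)) * (3 / 4) ≤ 1 / 9 :=
    calc _ ≤ (1 - l) ^ d * exp (l * (m - V y)) *
          (gibbsMeasure V).real (Metric.closedBall 0 (2 * √d)) := by
          gcongr; exact hiso.three_fourths_le_measureReal_closedBall hd
      _ ≤ _ := hlow.trans
          (measureReal_image_smul_add_closedBall_le hiso hd hl (by linarith) hy)
  have he : 8 / 27 ≤ exp (-1) := by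
    rw [exp_neg, le_inv_comm₀ (by norm_num) (exp_pos 1)]
    linarith [exp_one_lt_d9]
  linarith

/-- The dilation about `y` moving the bulk of the mass to distance at least `3 √d` from the origin
cannot preserve mass by Chebyshev; convexity turns this into growth of `V` at `y`. -/
lemma exists_forall_add_norm_div_le (hd : 0 < d) (hV : Continuous V) (hc : ConvexOn ℝ univ V)
    (hiso : IsIsotropic (gibbsMeasure V)) :
    ∃ y₀, ‖y₀‖ ≤ 2 * √d ∧ ∀ y, 10 * (d * √d) ≤ ‖y‖ → V y₀ + ‖y‖ / (5 * √d) ≤ V y := by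
  have : (0 : ℝ) < d := Nat.cast_pos.2 hd
  obtain ⟨y₀, hy₀, hmin⟩ := (isCompact_closedBall (0 : EuclideanSpace ℝ (Fin d))
    (2 * √d)).exists_isMinOn ⟨0, by simp⟩ hV.continuousOn
  refine ⟨y₀, by simpa using hy₀, fun y hy => ?_⟩
  have hypos : 0 < ‖y‖ := lt_of_lt_of_le (by positivity) hy
  have hld : 5 * √d / ‖y‖ * d ≤ 1 / 2 := by
    rw [div_mul_eq_mul_div, div_le_iff₀ hypos]
    linarith
  have hexp := exp_le_exp.1 <| exp_mul_sub_le_of_isIsotropic hd hc hiso (by positivity) hld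
    (div_mul_cancel₀ _ hypos.ne').ge hmin
  have hscale : ‖y‖ / (5 * √d) * (5 * √d / ‖y‖ * (V y₀ - V y)) = V y₀ - V y := by field_simp
  have hle := mul_le_mul_of_nonneg_left hexp (by positivity : 0 ≤ ‖y‖ / (5 * √d))
  linarith

lemma gibbsMeasure_real_norm_ge_le (hd : 0 < d) (hV : Continuous V) (hc : ConvexOn ℝ univ V)
    (hiso : IsIsotropic (gibbsMeasure V)) {t : ℝ} (ht : 22 * (d * √d) ≤ t) :
    (gibbsMeasure V).real {y | t ≤ ‖y‖} ≤ 2 ^ d * exp (-((t - 2 * √d) / (10 * √d))) := by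
  have hd' : (1 : ℝ) ≤ d := Nat.one_le_cast.2 hd
  have hsqrt : 1 ≤ √(d : ℝ) := one_le_sqrt.2 hd'
  obtain ⟨y₀, hy₀, hdecay⟩ := exists_forall_add_norm_div_le hd hV hc hiso
  let T : EuclideanSpace ℝ (Fin d) → EuclideanSpace ℝ (Fin d) := fun z => (2 : ℝ) • z + -y₀
  have hsurj : Function.Surjective T := fun y => ⟨(2 : ℝ)⁻¹ • (y + y₀), by simp [T, smul_smul]⟩
  have hmeas : MeasurableSet (T ⁻¹' {y | t ≤ ‖y‖}) :=
    (by fun_prop : Measurable T) (measurableSet_norm_ge t)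
  have hgain : ∀ z ∈ T ⁻¹' {y | t ≤ ‖y‖}, V z ≤ V (T z) + -((t - 2 * √d) / (10 * √d)) := by
    intro z (hz : t ≤ ‖T z‖)
    have hmid := hc.2 (mem_univ (T z)) (mem_univ y₀) (by norm_num : (0 : ℝ) ≤ 1 / 2)
      (by norm_num : (0 : ℝ) ≤ 1 / 2) (by norm_num)
    rw [show (1 / 2 : ℝ) • T z + (1 / 2 : ℝ) • y₀ = z by simp [T, smul_smul]] at hmid
    have hnorm := norm_add_le ((2 : ℝ) • z) (-y₀)
    rw [norm_neg, norm_smul, norm_of_nonneg zero_le_two] at hnorm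
    have hzt : (t - 2 * √d) / (10 * √d) ≤ ‖z‖ / (5 * √d) := by
      rw [div_le_div_iff₀ (by positivity) (by positivity)]
      nlinarith
    have hVz := hdecay z (by nlinarith)
    simp only [smul_eq_mul] at hmid
    linarith
  rw [← image_preimage_eq {y | t ≤ ‖y‖} hsurj]
  refine ENNReal.toReal_le_of_le_ofReal (by positivity) ?_
  rw [gibbsMeasure_image_smul_add two_pos _ hmeas, ENNReal.ofReal_mul (by positivity)]
  gcongr
  exact (gibbsMeasure_le_ofReal_exp_mul hmeas hgain).trans (mul_le_of_le_one_right' prob_le_one)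

end LogConcave

section Growth

lemma norm_div_three_le_of_inner_nonneg {E : Type*} [NormedAddCommGroup E] [InnerProductSpace ℝ E]
    {x p z q : E} (hp : p ≠ 0) {ρ : ℝ} (hρ : 0 < ρ) (hmono : 0 ≤ ⟪q - p, z - x⟫)
    (hz : ‖z - (x + (ρ / ‖p‖) • p)‖ ≤ ρ / 2) : ‖p‖ / 3 ≤ ‖q‖ := by
  have hp' : 0 < ‖p‖ := norm_pos_iff.2 hp
  set u := z - (x + (ρ / ‖p‖) • p) with hu
  have hzx : z - x = u + (ρ / ‖p‖) • p := by rw [hu]; abel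
  have hnorm : ‖(ρ / ‖p‖) • p‖ = ρ := by
    rw [norm_smul, norm_of_nonneg (by positivity), div_mul_cancel₀ _ hp'.ne']
  have hdist : ‖z - x‖ ≤ 3 * ρ / 2 := by
    rw [hzx]
    linarith [norm_add_le u ((ρ / ‖p‖) • p)]
  have hlower : ρ * ‖p‖ / 2 ≤ ⟪p, z - x⟫ := by
    rw [hzx, inner_add_right, inner_smul_right, real_inner_self_eq_norm_sq]
    have hpu := neg_le_of_abs_le (abs_real_inner_le_norm p u)
    have hpp : ρ / ‖p‖ * ‖p‖ ^ 2 = ρ * ‖p‖ := by field_simp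
    nlinarith
  have hupper : ⟪q, z - x⟫ ≤ ‖q‖ * (3 * ρ / 2) := (real_inner_le_norm _ _).trans (by gcongr)
  rw [inner_sub_left] at hmono
  exact le_of_mul_le_mul_left (by linarith) hρ

variable {d : ℕ}

lemma ofReal_four_pow_le_volume_closedBall (a : EuclideanSpace ℝ (Fin d)) :
    ENNReal.ofReal (4 ^ d) ≤ volume (Metric.closedBall a (2 * √d)) := by
  have hcube := (PiLp.volume_preserving_ofLp (Fin d)).measure_preimage
    (measurableSet_Icc (a := fun i => a i - 2) (b := fun i => a i + 2)).nullMeasurableSet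
  have hside : ∀ i, a i + 2 - (a i - 2) = 4 := fun i => by ring
  simp only [Real.volume_Icc_pi, hside, Finset.prod_const, Finset.card_univ, Fintype.card_fin]
    at hcube
  rw [ENNReal.ofReal_pow (by norm_num), ← hcube]
  refine measure_mono fun z hz => ?_
  rw [mem_closedBall_iff_norm, ← abs_of_nonneg (by positivity : 0 ≤ 2 * √(d : ℝ)),
    ← abs_norm, ← sq_le_sq, EuclideanSpace.real_norm_sq_eq, mul_pow, sq_sqrt (Nat.cast_nonneg d)]
  have hcoord : ∀ i ∈ Finset.univ, (z - a) i ^ 2 ≤ 4 := fun i _ => by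
    have hlower := hz.1 i
    have hupper := hz.2 i
    simp only [PiLp.sub_apply] at *
    nlinarith
  exact (Finset.sum_le_card_nsmul _ _ _ hcoord).trans_eq (by simp; ring)

lemma one_le_two_pi_rpow_mul_four_pow (d : ℕ) : 1 ≤ (2 * π) ^ (-(d : ℝ) / 2) * 4 ^ d := by
  have hfour : (4 : ℝ) ^ d = 16 ^ ((d : ℝ) / 2) := by
    rw [show (16 : ℝ) = 4 ^ (2 : ℝ) by norm_num, ← rpow_mul (by norm_num),
      mul_div_cancel₀ _ two_ne_zero, rpow_natCast]
  have hpi : (2 * π) ^ ((d : ℝ) / 2) ≤ 16 ^ ((d : ℝ) / 2) :=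
    rpow_le_rpow (by positivity) (by linarith [pi_lt_four]) (by positivity)
  rw [neg_div, rpow_neg (by positivity), hfour, inv_mul_eq_div, le_div_iff₀ (by positivity)]
  linarith

lemma ofReal_exp_le_stdGaussian_closedBall (a : EuclideanSpace ℝ (Fin d)) :
    ENNReal.ofReal (exp (-(‖a‖ + 2 * √d) ^ 2 / 2)) ≤
      stdGaussian d (Metric.closedBall a (2 * √d)) := by
  have hmeas : MeasurableSet (Metric.closedBall a (2 * √d)) :=
    Metric.isClosed_closedBall.measurableSet
  rw [stdGaussian, withDensity_apply _ hmeas]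
  calc ENNReal.ofReal (exp (-(‖a‖ + 2 * √d) ^ 2 / 2))
      ≤ ENNReal.ofReal ((2 * π) ^ (-(d : ℝ) / 2) * exp (-(‖a‖ + 2 * √d) ^ 2 / 2))
          * ENNReal.ofReal (4 ^ d) := by
        rw [← ENNReal.ofReal_mul (by positivity), mul_right_comm]
        exact ENNReal.ofReal_le_ofReal
          (le_mul_of_one_le_left (exp_pos _).le (one_le_two_pi_rpow_mul_four_pow d))
    _ ≤ ENNReal.ofReal ((2 * π) ^ (-(d : ℝ) / 2) * exp (-(‖a‖ + 2 * √d) ^ 2 / 2))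
          * volume (Metric.closedBall a (2 * √d)) := by
        gcongr; exact ofReal_four_pow_le_volume_closedBall a
    _ ≤ _ := by
        rw [← setLIntegral_const]
        refine setLIntegral_mono' hmeas fun z hz => ?_
        have hnorm : ‖z‖ ≤ ‖a‖ + 2 * √d := by
          linarith [norm_le_norm_add_norm_sub' z a, mem_closedBall_iff_norm.1 hz]
        gcongr

variable {V φ : EuclideanSpace ℝ (Fin d) → ℝ}

lemma exp_le_measureReal_norm_ge_of_isBrenierPotential [IsProbabilityMeasure (gibbsMeasure V)]
    (hd : 0 < d) (hφ : ContDiff ℝ 1 φ)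
    (hbr : IsBrenierPotential φ (gibbsMeasure V)) {x : EuclideanSpace ℝ (Fin d)}
    (hx : gradient φ x ≠ 0) :
    exp (-(‖x‖ + 6 * √d) ^ 2 / 2) ≤
      (gibbsMeasure V).real {y | ‖gradient φ x‖ / 3 ≤ ‖y‖} := by
  have : (0 : ℝ) < d := Nat.cast_pos.2 hd
  let a := x + ((4 * √d) / ‖gradient φ x‖) • gradient φ x
  have hsub : Metric.closedBall a (2 * √d) ⊆
      gradient φ ⁻¹' {y | ‖gradient φ x‖ / 3 ≤ ‖y‖} := fun z hz =>
    norm_div_three_le_of_inner_nonneg hx (by positivity)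
      (inner_gradient_sub_nonneg hbr.2.1 hbr.1 x z)
      ((mem_closedBall_iff_norm.1 hz).trans_eq (by ring))
  have hnorm : ‖a‖ ≤ ‖x‖ + 4 * √d := by
    refine (norm_add_le _ _).trans_eq ?_
    rw [norm_smul, norm_of_nonneg (by positivity), div_mul_cancel₀ _ (norm_ne_zero_iff.2 hx)]
  have hle := (ofReal_exp_le_stdGaussian_closedBall a).trans (measure_mono hsub)
  rw [← Measure.map_apply (continuous_gradient hφ).measurable (measurableSet_norm_ge _),
    hbr.2.2] at hle
  refine le_trans (exp_le_exp.2 ?_) ((ENNReal.ofReal_le_iff_le_toReal (measure_ne_top _ _)).1 hle)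
  have hsq : (‖a‖ + 2 * √d) ^ 2 ≤ (‖x‖ + 6 * √d) ^ 2 := by
    gcongr ?_ ^ 2
    linarith
  linarith

lemma norm_gradient_le_of_isBrenierPotential [IsProbabilityMeasure (gibbsMeasure V)]
    (hd : 0 < d) (hV : Continuous V) (hVc : ConvexOn ℝ univ V) (hiso : IsIsotropic (gibbsMeasure V))
    (hφ : ContDiff ℝ 1 φ) (hbr : IsBrenierPotential φ (gibbsMeasure V))
    (x : EuclideanSpace ℝ (Fin d)) : ‖gradient φ x‖ ≤ 1200 * √d * (d + ‖x‖ ^ 2) := by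
  have hd' : (1 : ℝ) ≤ d := Nat.one_le_cast.2 hd
  have hsqrt : 1 ≤ √(d : ℝ) := one_le_sqrt.2 hd'
  have hsq : √(d : ℝ) ^ 2 = d := sq_sqrt (by positivity)
  have hnonneg : 0 ≤ √(d : ℝ) * ‖x‖ ^ 2 := by positivity
  rcases lt_or_ge (‖gradient φ x‖ / 3) (22 * (d * √d)) with hsmall | hlarge
  · nlinarith
  have hne : gradient φ x ≠ 0 := norm_pos_iff.1 <|
    pos_of_mul_pos_left (lt_of_lt_of_le (by positivity) hlarge) (by norm_num : (0 : ℝ) ≤ 3⁻¹)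
  have htwo : (2 : ℝ) ^ d ≤ exp d := by
    rw [← exp_one_pow]
    gcongr
    linarith [add_one_le_exp (1 : ℝ)]
  have hexp : exp (-(‖x‖ + 6 * √d) ^ 2 / 2)
      ≤ exp (d + -((‖gradient φ x‖ / 3 - 2 * √d) / (10 * √d))) := by
    rw [exp_add]
    exact (exp_le_measureReal_norm_ge_of_isBrenierPotential hd hφ hbr hne).trans <|
      (gibbsMeasure_real_norm_ge_le hd hV hVc hiso hlarge).trans (by gcongr)
  have hlog := exp_le_exp.1 hexp
  have hbound : (‖gradient φ x‖ / 3 - 2 * √d) / (10 * √d) ≤ 37 * d + ‖x‖ ^ 2 := by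
    nlinarith [sq_nonneg (‖x‖ - 6 * √d)]
  rw [div_le_iff₀ (by positivity)] at hbound
  nlinarith

end Growth

section Coercivity

section Hilbert

variable {E : Type*} [NormedAddCommGroup E] [InnerProductSpace ℝ E] [CompleteSpace E]
  {V φ : E → ℝ}

lemma exists_le_mul_one_add_norm_sq (hV : ContDiff ℝ 2 V) {c : ℝ}
    (h : ∀ x v, ⟪hessian V x v, v⟫ ≤ c * ‖v‖ ^ 2) :
    ∃ M, 0 < M ∧ ∀ y, V y ≤ M * (1 + ‖y‖) ^ 2 := by
  refine ⟨|V 0| + ‖gradient V 0‖ + |c| + 1, by positivity, fun y => ?_⟩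
  have hbreg := bregmanDivergence_le hV h 0 y
  simp only [bregmanDivergence, sub_zero] at hbreg
  have hinner := real_inner_le_norm (gradient V 0) y
  have hone : 1 ≤ (1 + ‖y‖) ^ 2 := one_le_pow₀ (by linarith [norm_nonneg y])
  have hlin : ‖y‖ ≤ (1 + ‖y‖) ^ 2 := by nlinarith [norm_nonneg y]
  have hquad : ‖y‖ ^ 2 ≤ (1 + ‖y‖) ^ 2 := by gcongr; linarith
  calc V y ≤ V 0 * 1 + ‖gradient V 0‖ * ‖y‖ + c / 2 * ‖y‖ ^ 2 := by linarith
    _ ≤ |V 0| * (1 + ‖y‖) ^ 2 + ‖gradient V 0‖ * (1 + ‖y‖) ^ 2 + |c| * (1 + ‖y‖) ^ 2 := by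
        gcongr
        · exact le_abs_self _
        · linarith [le_abs_self c, abs_nonneg c]
    _ ≤ _ := by linarith

/-- The tangent planes of `φ` with slopes forming a `1/2`-net of the unit ball bound `φ` below. -/
lemma exists_mul_norm_sub_le_of_denseRange_gradient [FiniteDimensional ℝ E]
    (hφ : Differentiable ℝ φ) (hc : ConvexOn ℝ univ φ) (hdense : DenseRange (gradient φ)) :
    ∃ a b, 0 < a ∧ ∀ x, a * ‖x‖ - b ≤ φ x := by
  have hcover : Metric.closedBall (0 : E) 1 ⊆ ⋃ p, Metric.ball (gradient φ p) (1 / 2) := fun v _ =>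
    mem_iUnion.2 <| (hdense.exists_dist_lt v (by norm_num)).imp fun _ hp => hp
  obtain ⟨t, ht⟩ := (isCompact_closedBall (0 : E) 1).elim_finite_subcover _
    (fun p => Metric.isOpen_ball) hcover
  obtain ⟨b, hb⟩ := (t.finite_toSet.image (dualPotential φ)).bddAbove
  refine ⟨1 / 2, b, by norm_num, fun x => ?_⟩
  obtain ⟨p, hp, hxp⟩ := mem_iUnion₂.1 <| ht <| show ‖x‖⁻¹ • x ∈ Metric.closedBall (0 : E) 1 by
    rw [mem_closedBall_zero_iff, norm_smul, norm_inv, norm_norm]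
    exact inv_mul_le_one
  have hdual := hb (mem_image_of_mem _ hp)
  have htangent := add_inner_gradient_le hφ hc p x
  have hdir : ⟪‖x‖⁻¹ • x, x⟫ = ‖x‖ := by
    rw [real_inner_smul_left, real_inner_self_eq_norm_sq, sq, ← mul_assoc, inv_mul_mul_self]
  have hnear : ⟪‖x‖⁻¹ • x - gradient φ p, x⟫ ≤ 1 / 2 * ‖x‖ :=
    (real_inner_le_norm _ _).trans <| by gcongr; exact (mem_ball_iff_norm.1 hxp).le
  rw [inner_sub_left, hdir] at hnear
  rw [inner_sub_right] at htangent
  rw [dualPotential, real_inner_comm] at hdual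
  linarith

end Hilbert

lemma denseRange_of_map_eq {α β : Type*} [MeasurableSpace α] [TopologicalSpace β]
    [MeasurableSpace β] [OpensMeasurableSpace β] {μ : Measure α} {ν : Measure β}
    [ν.IsOpenPosMeasure] {f : α → β} (hf : Measurable f) (hmap : μ.map f = ν) : DenseRange f := by
  refine dense_iff_inter_open.2 fun U hU hne => ?_
  have hpos := hU.measure_ne_zero ν hne
  rw [← hmap, Measure.map_apply hf hU.measurableSet] at hpos
  obtain ⟨x, hx⟩ := nonempty_of_measure_ne_zero hpos
  exact ⟨f x, hx, mem_range_self x⟩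

variable {d : ℕ} {V φ : EuclideanSpace ℝ (Fin d) → ℝ}

lemma isOpenPosMeasure_gibbsMeasure (hV : Continuous V) : (gibbsMeasure V).IsOpenPosMeasure :=
  (withDensity_absolutelyContinuous' (by fun_prop)
    (.of_forall fun x => by simp [exp_pos])).isOpenPosMeasure

lemma exists_mul_norm_sub_le_of_isBrenierPotential (hV : Continuous V) (hφ : ContDiff ℝ 1 φ)
    (hbr : IsBrenierPotential φ (gibbsMeasure V)) : ∃ a b, 0 < a ∧ ∀ x, a * ‖x‖ - b ≤ φ x :=
  have := isOpenPosMeasure_gibbsMeasure hV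
  exists_mul_norm_sub_le_of_denseRange_gradient hbr.2.1 hbr.1
    (denseRange_of_map_eq (continuous_gradient hφ).measurable hbr.2.2)

lemma tendsto_cocompact_atTop_of_isIsotropic [IsProbabilityMeasure (gibbsMeasure V)] (hd : 0 < d)
    (hV : Continuous V) (hc : ConvexOn ℝ univ V) (hiso : IsIsotropic (gibbsMeasure V)) :
    Tendsto V (cocompact _) atTop := by
  obtain ⟨y₀, -, hgrowth⟩ := exists_forall_add_norm_div_le hd hV hc hiso
  have hnorm := tendsto_norm_cocompact_atTop (E := EuclideanSpace ℝ (Fin d))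
  have : (0 : ℝ) < d := Nat.cast_pos.2 hd
  exact tendsto_atTop_mono' _ ((hnorm.eventually_ge_atTop _).mono hgrowth)
    (tendsto_atTop_add_const_left _ _ (hnorm.atTop_div_const (by positivity)))

lemma exists_stdGaussian_norm_ge_le (d : ℕ) : ∃ M, 0 < M ∧ ∀ s, 0 ≤ s →
    stdGaussian d {z | s ≤ ‖z‖} ≤ ENNReal.ofReal (M * exp (-s ^ 2 / 4)) := by
  let c : ℝ := (2 * π) ^ (-(d : ℝ) / 2)
  let g : EuclideanSpace ℝ (Fin d) → ℝ := fun v => exp (-(1 / 4) * ‖v‖ ^ 2)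
  have hpos : 0 < ∫ v, g v := by
    rw [GaussianFourier.integral_rexp_neg_mul_sq_norm (by norm_num)]
    positivity
  have hint : Integrable g := not_imp_comm.1 integral_undef hpos.ne'
  have hdensity : ∀ s : ℝ, 0 ≤ s → ∀ z ∈ {z : EuclideanSpace ℝ (Fin d) | s ≤ ‖z‖},
      ENNReal.ofReal (c * exp (-‖z‖ ^ 2 / 2)) ≤
        ENNReal.ofReal (c * exp (-s ^ 2 / 4)) * ENNReal.ofReal (g z) := fun s hs z hz => by
    rw [← ENNReal.ofReal_mul (by positivity), mul_assoc, ← exp_add]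
    have hsq : s ^ 2 ≤ ‖z‖ ^ 2 := pow_le_pow_left₀ hs hz 2
    gcongr
    linarith
  refine ⟨c * ∫ v, g v, by positivity, fun s hs => ?_⟩
  calc stdGaussian d {z | s ≤ ‖z‖}
      ≤ ∫⁻ z in {z | s ≤ ‖z‖}, ENNReal.ofReal (c * exp (-s ^ 2 / 4)) * ENNReal.ofReal (g z) := by
        rw [stdGaussian, withDensity_apply _ (measurableSet_norm_ge s)]
        exact setLIntegral_mono' (measurableSet_norm_ge s) (hdensity s hs)
    _ ≤ ∫⁻ z, ENNReal.ofReal (c * exp (-s ^ 2 / 4)) * ENNReal.ofReal (g z) :=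
        setLIntegral_le_lintegral _ _
    _ = ENNReal.ofReal (c * (∫ v, g v) * exp (-s ^ 2 / 4)) := by
        rw [lintegral_const_mul' _ _ ENNReal.ofReal_ne_top,
          ← ofReal_integral_eq_lintegral_ofReal hint (.of_forall fun _ => (exp_pos _).le),
          ← ENNReal.ofReal_mul (by positivity), mul_right_comm]

lemma ofReal_volume_mul_exp_le_gibbsMeasure_closedBall {a : EuclideanSpace ℝ (Fin d)} {r t : ℝ}
    (h : ∀ z ∈ Metric.closedBall a r, V z ≤ t) :
    ENNReal.ofReal (volume.real (Metric.closedBall (0 : EuclideanSpace ℝ (Fin d)) r) * exp (-t)) ≤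
      gibbsMeasure V (Metric.closedBall a r) := by
  have hmeas : MeasurableSet (Metric.closedBall a r) := Metric.isClosed_closedBall.measurableSet
  rw [mul_comm, ENNReal.ofReal_mul (exp_pos _).le, ofReal_measureReal measure_closedBall_lt_top.ne,
    ← Measure.addHaar_closedBall_center volume a, ← setLIntegral_const, gibbsMeasure,
    withDensity_apply _ hmeas]
  exact setLIntegral_mono' hmeas fun z hz => by
    have hVz := h z hz
    gcongr

lemma ofReal_volume_mul_exp_le_stdGaussian_norm_ge (hφ : ContDiff ℝ 1 φ)
    (hbr : IsBrenierPotential φ (gibbsMeasure V)) {M : ℝ} (hM : 0 < M)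
    (hVM : ∀ y, V y ≤ M * (1 + ‖y‖) ^ 2) {x : EuclideanSpace ℝ (Fin d)} (hx : x ≠ 0) :
    ENNReal.ofReal (volume.real (Metric.closedBall (0 : EuclideanSpace ℝ (Fin d)) (1 / 2)) *
      exp (-(9 * M * (1 + ‖gradient φ x‖) ^ 2))) ≤ stdGaussian d {z | ‖x‖ / 3 ≤ ‖z‖} := by
  let a := gradient φ x + (1 / ‖x‖) • x
  have hnorm : ‖a‖ ≤ ‖gradient φ x‖ + 1 := by
    refine (norm_add_le _ _).trans_eq ?_
    rw [norm_smul, norm_of_nonneg (by positivity), div_mul_cancel₀ _ (norm_ne_zero_iff.2 hx)]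
  have hsub : gradient φ ⁻¹' Metric.closedBall a (1 / 2) ⊆ {z | ‖x‖ / 3 ≤ ‖z‖} := fun z hz =>
    norm_div_three_le_of_inner_nonneg hx one_pos
      (by rw [real_inner_comm]; exact inner_gradient_sub_nonneg hbr.2.1 hbr.1 x z)
      (mem_closedBall_iff_norm.1 (mem_preimage.1 hz))
  have hball : ∀ z ∈ Metric.closedBall a (1 / 2), V z ≤ 9 * M * (1 + ‖gradient φ x‖) ^ 2 := by
    intro z hz
    have hz' : 1 + ‖z‖ ≤ 3 * (1 + ‖gradient φ x‖) := by
      linarith [norm_le_norm_add_norm_sub' z a, mem_closedBall_iff_norm.1 hz,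
        norm_nonneg (gradient φ x)]
    calc V z ≤ M * (3 * (1 + ‖gradient φ x‖)) ^ 2 := (hVM z).trans (by gcongr)
      _ = 9 * M * (1 + ‖gradient φ x‖) ^ 2 := by ring
  refine (ofReal_volume_mul_exp_le_gibbsMeasure_closedBall hball).trans ?_
  rw [← hbr.2.2, Measure.map_apply (continuous_gradient hφ).measurable
    Metric.isClosed_closedBall.measurableSet]
  exact measure_mono hsub

lemma exists_norm_le_mul_one_add_norm_gradient (hφ : ContDiff ℝ 1 φ)
    (hbr : IsBrenierPotential φ (gibbsMeasure V)) {M : ℝ} (hM : 0 < M)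
    (hVM : ∀ y, V y ≤ M * (1 + ‖y‖) ^ 2) :
    ∃ C, 0 < C ∧ ∀ x, ‖x‖ ≤ C * (1 + ‖gradient φ x‖) := by
  obtain ⟨N, hN, htail⟩ := exists_stdGaussian_norm_ge_le d
  let κ := volume.real (Metric.closedBall (0 : EuclideanSpace ℝ (Fin d)) (1 / 2))
  have hκ : 0 < κ := ENNReal.toReal_pos
    (Metric.measure_closedBall_pos volume _ (by norm_num)).ne' measure_closedBall_lt_top.ne
  let L := |log (N / κ)| + 9 * M
  have hL : 0 < L := by positivity
  refine ⟨6 * √L, by positivity, fun x => ?_⟩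
  rcases eq_or_ne x 0 with rfl | hx
  · rw [norm_zero]; positivity
  set y := gradient φ x
  have hle : κ * exp (-(9 * M * (1 + ‖y‖) ^ 2)) ≤ N * exp (-(‖x‖ / 3) ^ 2 / 4) :=
    (ENNReal.ofReal_le_ofReal_iff (by positivity)).1 <|
      (ofReal_volume_mul_exp_le_stdGaussian_norm_ge hφ hbr hM hVM hx).trans
        (htail _ (by positivity))
  have hexp : exp (-(9 * M * (1 + ‖y‖) ^ 2)) ≤ exp (log (N / κ) + -(‖x‖ / 3) ^ 2 / 4) := by
    rw [exp_add, exp_log (by positivity), div_mul_eq_mul_div, le_div_iff₀' hκ]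
    exact hle
  have hone : 1 ≤ (1 + ‖y‖) ^ 2 := one_le_pow₀ (by linarith [norm_nonneg y])
  have hlog : log (N / κ) ≤ |log (N / κ)| * (1 + ‖y‖) ^ 2 :=
    (le_abs_self _).trans (le_mul_of_one_le_right (abs_nonneg _) hone)
  refine abs_le_of_sq_le_sq' ?_ (by positivity) |>.2
  rw [mul_pow, mul_pow, sq_sqrt hL.le]
  linarith [exp_le_exp.1 hexp]

end Coercivity

section Comparison

variable {E : Type*} [NormedAddCommGroup E] [InnerProductSpace ℝ E]

section Dual

variable [CompleteSpace E] {φ : E → ℝ}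

lemma mul_norm_gradient_sub_le_dualPotential (hφ : Differentiable ℝ φ) (hc : ConvexOn ℝ univ φ)
    {R M : ℝ} (hR : 0 ≤ R) (hM : ∀ z, ‖z‖ ≤ R → φ z ≤ M) (x : E) :
    R * ‖gradient φ x‖ - M ≤ dualPotential φ x := by
  set p := gradient φ x with hp
  have hnorm : ‖(R / ‖p‖) • p‖ ≤ R := by
    rw [norm_smul, norm_of_nonneg (by positivity)]
    rw [div_mul_comm]; exact mul_le_of_le_one_left hR (div_self_le_one _)
  have hinner : ⟪p, (R / ‖p‖) • p⟫ = R * ‖p‖ := by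
    rw [inner_smul_right, real_inner_self_eq_norm_mul_norm, div_mul_eq_mul_div, mul_div_assoc,
      mul_self_div_self]
  have htangent := add_inner_gradient_le hφ hc x ((R / ‖p‖) • p)
  rw [← hp, inner_sub_right, hinner] at htangent
  rw [dualPotential, real_inner_comm]
  linarith [hM _ hnorm]

lemma exists_mul_norm_sub_le_dualPotential [FiniteDimensional ℝ E] (hφ : Differentiable ℝ φ)
    (hc : ConvexOn ℝ univ φ) {C : ℝ} (hC : 0 < C) (hgrad : ∀ x, ‖x‖ ≤ C * (1 + ‖gradient φ x‖))
    {K : ℝ} (hK : 0 ≤ K) : ∃ b, ∀ x, K * ‖x‖ - b ≤ dualPotential φ x := by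
  obtain ⟨M, hM⟩ := ((isCompact_closedBall (0 : E) (K * C)).image hφ.continuous).bddAbove
  refine ⟨K * C + M, fun x => ?_⟩
  have hdual := mul_norm_gradient_sub_le_dualPotential hφ hc (by positivity : 0 ≤ K * C)
    (fun z hz => hM (mem_image_of_mem φ (mem_closedBall_zero_iff.2 hz))) x
  have hx := mul_le_mul_of_nonneg_left (hgrad x) hK
  linarith

lemma secondDifference_le_of_norm_gradient_le (hφ : Differentiable ℝ φ) (hc : ConvexOn ℝ univ φ)
    {N D : ℝ} (hgrad : ∀ x, ‖gradient φ x‖ ≤ N * (D + ‖x‖ ^ 2)) (h x : E) :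
    secondDifference φ h x ≤ 2 * N * (D + ‖x‖ ^ 2 + ‖h‖ ^ 2) * ‖h‖ := by
  have hparallelogram := parallelogram_law_with_norm ℝ x h
  calc secondDifference φ h x ≤ ⟪gradient φ (x + h) - gradient φ (x - h), h⟫ :=
        secondDifference_le_inner hφ hc h x
    _ ≤ (‖gradient φ (x + h)‖ + ‖gradient φ (x - h)‖) * ‖h‖ :=
        (real_inner_le_norm _ _).trans (by gcongr; exact norm_sub_le _ _)
    _ ≤ (N * (D + ‖x + h‖ ^ 2) + N * (D + ‖x - h‖ ^ 2)) * ‖h‖ := by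
        gcongr <;> exact hgrad _
    _ = 2 * N * (D + ‖x‖ ^ 2 + ‖h‖ ^ 2) * ‖h‖ := by
        linear_combination N * ‖h‖ * hparallelogram

lemma mul_norm_le_of_le_secondDifference (hφ : Differentiable ℝ φ) (hc : ConvexOn ℝ univ φ)
    {h x : E} (hh : h ≠ 0) {m : ℝ} (hm : m * ‖h‖ ^ 2 ≤ secondDifference φ h x) :
    m * ‖h‖ ≤ ‖gradient φ (x + h) - gradient φ x‖ + ‖gradient φ (x - h) - gradient φ x‖ := by
  refine le_of_mul_le_mul_right ?_ (norm_pos_iff.2 hh)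
  calc m * ‖h‖ * ‖h‖ = m * ‖h‖ ^ 2 := by ring
    _ ≤ ⟪gradient φ (x + h) - gradient φ (x - h), h⟫ :=
        hm.trans (secondDifference_le_inner hφ hc h x)
    _ ≤ ‖gradient φ (x + h) - gradient φ (x - h)‖ * ‖h‖ := real_inner_le_norm _ _
    _ ≤ _ := by
        gcongr
        rw [← sub_sub_sub_cancel_right _ _ (gradient φ x)]
        exact norm_sub_le _ _

lemma tendsto_penalizedSecondDifference [FiniteDimensional ℝ E] (hφ : Differentiable ℝ φ)
    (hc : ConvexOn ℝ univ φ) {N D C a β B : ℝ}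
    (hN : 0 ≤ N) (hupper : ∀ x, ‖gradient φ x‖ ≤ N * (D + ‖x‖ ^ 2))
    (hC : 0 < C) (hlower : ∀ x, ‖x‖ ≤ C * (1 + ‖gradient φ x‖))
    (ha : 0 < a) (hβ : ∀ x, a * ‖x‖ ≤ φ x + β) (hB : ∀ x, 0 ≤ dualPotential φ x + B)
    {α ε : ℝ} (hα : 0 ≤ α) (hε : 0 < ε) (h : E) :
    Tendsto (penalizedSecondDifference φ h α ε β B) (cocompact E) atBot := by
  let P := 2 * N * ‖h‖
  obtain ⟨b, hb⟩ := exists_mul_norm_sub_le_dualPotential hφ hc hC hlower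
    (by positivity : 0 ≤ (P + 1) / (ε * a))
  have hbound : ∀ x, penalizedSecondDifference φ h α ε β B x ≤
      ‖x‖ * (ε * a * (b - B) - ‖x‖) + P * (D + ‖h‖ ^ 2) := fun x => by
    have hdiff := secondDifference_le_of_norm_gradient_le hφ hc hupper h x
    have hpenalty : ε * (a * ‖x‖) * ((P + 1) / (ε * a) * ‖x‖ - b + B) ≤
        (ε * (φ x + β) + α) * (dualPotential φ x + B) :=
      calc _ ≤ ε * (a * ‖x‖) * (dualPotential φ x + B) := by gcongr; exact hb x
        _ ≤ (ε * (φ x + β) + α) * (dualPotential φ x + B) := by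
          have hβx := mul_le_mul_of_nonneg_left (hβ x) hε.le
          exact mul_le_mul_of_nonneg_right (by linarith) (hB x)
    have hcancel : ε * (a * ‖x‖) * ((P + 1) / (ε * a) * ‖x‖ - b + B) =
        (P + 1) * ‖x‖ ^ 2 - ε * a * (b - B) * ‖x‖ := by field_simp; ring
    rw [penalizedSecondDifference]
    linear_combination hdiff + hpenalty - hcancel
  have hnorm := tendsto_norm_cocompact_atTop (E := E)
  refine tendsto_atBot_mono hbound (tendsto_atBot_add_const_right _ _ ?_)
  exact hnorm.atTop_mul_atBot₀
    (tendsto_atBot_add_const_left _ _ (tendsto_neg_atTop_atBot.comp hnorm))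

end Dual

lemma exists_forall_le_of_eventually_nonpos {X : Type*} [TopologicalSpace X] {f : X → ℝ}
    (hf : Continuous f) (h : ∀ᶠ x in cocompact X, f x ≤ 0) : ∃ C, ∀ x, f x ≤ C := by
  rcases isEmpty_or_nonempty X with _ | ⟨⟨x₀⟩⟩
  · exact ⟨0, fun x => isEmptyElim x⟩
  obtain ⟨x, hx⟩ := (hf.max continuous_const).exists_forall_ge' (f := fun x => max (f x) 0) x₀ <|
    h.mono fun z hz => (max_eq_right hz).trans_le (le_max_right _ _)
  exact ⟨max (f x) 0, fun z => (le_max_left _ _).trans (hx z)⟩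

section Gain

variable [CompleteSpace E] {V φ : E → ℝ}

lemma div_le_bregmanDivergence (hV : ContDiff ℝ 2 V) {c D : ℝ} (hc : 0 ≤ c) (hD : 0 < D)
    (h : ∀ x v, c / (D + ‖x‖) * ‖v‖ ^ 2 ≤ ⟪hessian V x v, v⟫) (y z : E) :
    c / 2 * (‖z - y‖ ^ 2 / (D + ‖y‖ + ‖z - y‖)) ≤ bregmanDivergence V y z := by
  refine le_trans (le_of_eq ?_) <| half_mul_le_bregmanDivergence hV y z
    (m := c / (D + ‖y‖ + ‖z - y‖) * ‖z - y‖ ^ 2) fun s hs => le_trans ?_ (h _ _)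
  · ring
  have hsegment : ‖y + s • (z - y)‖ ≤ ‖y‖ + ‖z - y‖ := by
    refine (norm_add_le _ _).trans ?_
    rw [norm_smul, norm_of_nonneg hs.1]
    gcongr
    exact mul_le_of_le_one_left (norm_nonneg _) hs.2
  have hle : D + ‖y + s • (z - y)‖ ≤ D + ‖y‖ + ‖z - y‖ := by linarith
  gcongr

lemma sq_div_add_le_sq_div_add {D p q : ℝ} (hD : 0 < D) (hp : 0 ≤ p) (hpq : p ≤ q) :
    p ^ 2 / (D + p) ≤ q ^ 2 / (D + q) := by
  rw [div_le_div_iff₀ (by linarith) (by linarith)]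
  have hsq : p ^ 2 ≤ q ^ 2 := by gcongr
  nlinarith [mul_le_mul_of_nonneg_left hpq (mul_nonneg hp (hp.trans hpq))]

lemma four_mul_sq_le_mul_sq_div {c A n s D w : ℝ} (hc : 0 ≤ c) (hA : 0 < A) (hs : 0 < s)
    (hD : 0 < D) (hw : 1 ≤ w) (hDw : n ^ 2 * D ≤ w ^ 2)
    (hAc : 32 * (1 + A * n) ≤ A ^ 2 * c * n ^ 2) (hsc : s * (16 * (1 + A * n)) ≤ c * A) :
    4 * (1 + A * n) * s ^ 2 ≤ c * ((A * s * w / 2) ^ 2 / (D + A * s * w / 2)) := by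
  set q := A * s * w / 2 with hq
  have : 0 < q := by positivity
  have hDpart : 4 * (1 + A * n) * s ^ 2 * D ≤ c * q ^ 2 / 2 :=
    calc 4 * (1 + A * n) * s ^ 2 * D = 32 * (1 + A * n) * (s ^ 2 * D / 8) := by ring
      _ ≤ A ^ 2 * c * n ^ 2 * (s ^ 2 * D / 8) := by gcongr
      _ = A ^ 2 * c * s ^ 2 / 8 * (n ^ 2 * D) := by ring
      _ ≤ A ^ 2 * c * s ^ 2 / 8 * w ^ 2 := by gcongr
      _ = c * q ^ 2 / 2 := by rw [hq]; ring
  have hqpart : 4 * (1 + A * n) * s ^ 2 * q ≤ c * q ^ 2 / 2 :=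
    calc 4 * (1 + A * n) * s ^ 2 * q = s * (16 * (1 + A * n)) * (s * q / 4) := by ring
      _ ≤ c * A * (s * q / 4) := by gcongr
      _ ≤ c * A * (s * q / 4) * w := le_mul_of_one_le_right (by positivity) hw
      _ = c * q ^ 2 / 2 := by rw [hq]; ring
  rw [← mul_div_assoc, le_div_iff₀ (by positivity)]
  linarith

lemma le_bregmanDivergence_add_of_le_norm_sub (hV : ContDiff ℝ 2 V) {c D : ℝ} (hc : 0 ≤ c)
    (hD : 0 < D) (h : ∀ x v, c / (D + ‖x‖) * ‖v‖ ^ 2 ≤ ⟪hessian V x v, v⟫) {y z z' : E} {q : ℝ}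
    (hq : 0 ≤ q) (hsum : 2 * q ≤ ‖z - y‖ + ‖z' - y‖) :
    c / 2 * (q ^ 2 / (D + ‖y‖ + q)) ≤ bregmanDivergence V y z + bregmanDivergence V y z' := by
  have hz := div_le_bregmanDivergence hV hc hD h y z
  have hz' := div_le_bregmanDivergence hV hc hD h y z'
  have hDy : 0 < D + ‖y‖ := by positivity
  have hpos : 0 ≤ c / 2 * (‖z - y‖ ^ 2 / (D + ‖y‖ + ‖z - y‖)) := by positivity
  have hpos' : 0 ≤ c / 2 * (‖z' - y‖ ^ 2 / (D + ‖y‖ + ‖z' - y‖)) := by positivity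
  have hmono : ∀ {r}, q ≤ r →
      c / 2 * (q ^ 2 / (D + ‖y‖ + q)) ≤ c / 2 * (r ^ 2 / (D + ‖y‖ + r)) := fun hr =>
    mul_le_mul_of_nonneg_left (sq_div_add_le_sq_div_add hDy hq hr) (by positivity)
  rcases le_total ‖z - y‖ ‖z' - y‖ with hle | hle
  · linarith [hmono (by linarith : q ≤ ‖z' - y‖)]
  · linarith [hmono (by linarith : q ≤ ‖z - y‖)]

lemma two_mul_norm_sq_le_bregmanDivergence_add (hV : ContDiff ℝ 2 V) (hφ : Differentiable ℝ φ)
    (hconv : ConvexOn ℝ univ φ) {A c n : ℝ} (hc : 0 ≤ c) (hn : 1 ≤ n)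
    (hVlow : ∀ x v, c / (n + ‖x‖) * ‖v‖ ^ 2 ≤ ⟪hessian V x v, v⟫)
    (hA : 0 < A) (hAc : 32 * (1 + A * n) ≤ A ^ 2 * c * n ^ 2) {h x : E} {w : ℝ}
    (hw : ‖gradient φ x‖ + n ^ 2 ≤ w) (hh : h ≠ 0)
    (hsmall : ‖h‖ * (16 * (1 + A * n)) ≤ c * A)
    (hdiff : A * w * ‖h‖ ^ 2 ≤ secondDifference φ h x) :
    2 * (1 + A * n) * ‖h‖ ^ 2 ≤ bregmanDivergence V (gradient φ x) (gradient φ (x + h))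
      + bregmanDivergence V (gradient φ x) (gradient φ (x - h)) := by
  have hnorm := norm_nonneg (gradient φ x)
  have hw1 : 1 ≤ w := by nlinarith
  have hnw : n ^ 2 * (n + ‖gradient φ x‖) ≤ w ^ 2 := by
    rw [sq w]
    gcongr <;> nlinarith
  have hseparation := mul_norm_le_of_le_secondDifference hφ hconv hh hdiff
  have hgain := le_bregmanDivergence_add_of_le_norm_sub hV hc (by positivity) hVlow
    (q := A * ‖h‖ * w / 2) (by positivity) (le_of_eq_of_le (by ring) hseparation)
  have hnum := four_mul_sq_le_mul_sq_div hc hA (norm_pos_iff.2 hh) (by positivity) hw1 hnw hAc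
    hsmall
  linarith

end Gain

section Estimate

variable [FiniteDimensional ℝ E] {V φ : E → ℝ} {κ A B a β c : ℝ}

lemma exists_forall_perturbation_le (hV : ContDiff ℝ 1 V) (hVc : ConvexOn ℝ univ V)
    (hVtop : Tendsto V (cocompact E) atTop) (hφ : ContDiff ℝ 1 φ) {C : ℝ} (hC : 0 < C)
    (hlower : ∀ x, ‖x‖ ≤ C * (1 + ‖gradient φ x‖)) (hβ : ∀ x, 0 ≤ φ x + β)
    (hB : ∀ x, 0 ≤ dualPotential φ x + B) (m : ℝ) :
    ∃ K, ∀ x, (φ x + β) * (m - ‖x‖ ^ 2) + (dualPotential φ x + B)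
      * (m - ⟪gradient V (gradient φ x), gradient φ x⟫) ≤ K := by
  have hφcont := hφ.continuous
  have hgφ := continuous_gradient hφ
  have hgV := continuous_gradient hV
  have hnorm := tendsto_norm_cocompact_atTop (E := E)
  have hgrad : Tendsto (gradient φ) (cocompact E) (cocompact E) := by
    refine tendsto_cocompact_of_tendsto_dist_comp_atTop 0 ?_
    refine tendsto_atTop_mono (fun x => ?_)
      (tendsto_atTop_add_const_right _ (-1) (hnorm.atTop_div_const hC))
    rw [dist_zero_right, ← sub_eq_add_neg, sub_le_iff_le_add', div_le_iff₀' hC]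
    exact hlower x
  refine exists_forall_le_of_eventually_nonpos (by unfold dualPotential; fun_prop) ?_
  filter_upwards [hnorm.eventually_ge_atTop (|m| + 1),
    (hVtop.comp hgrad).eventually_ge_atTop (m + V 0)] with x hx hVx
  have hsq : m ≤ ‖x‖ ^ 2 := by nlinarith [le_abs_self m, abs_nonneg m]
  have htangent := add_inner_gradient_le (hV.differentiable one_ne_zero) hVc (gradient φ x) 0
  rw [zero_sub, inner_neg_right] at htangent
  rw [Function.comp_apply] at hVx
  exact add_nonpos (mul_nonpos_of_nonneg_of_nonpos (hβ x) (by linarith))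
    (mul_nonpos_of_nonneg_of_nonpos (hB x) (by linarith))

lemma IsMongeAmpereSolution.penalizedSecondDifference_nonpos_of_max
    (hMA : IsMongeAmpereSolution φ V κ) (hE : 0 < finrank ℝ E) (hV : ContDiff ℝ 2 V)
    (hφ : ContDiff ℝ 3 φ) (hconv : ConvexOn ℝ univ φ) (hc : 0 ≤ c)
    (hVlow : ∀ x v, c / (finrank ℝ E + ‖x‖) * ‖v‖ ^ 2 ≤ ⟪hessian V x v, v⟫)
    (hβ : ∀ x, 0 ≤ φ x + β)
    (hB : ∀ x, ‖gradient φ x‖ + (finrank ℝ E : ℝ) ^ 2 ≤ dualPotential φ x + B)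
    (hA : 0 < A) (hAc : 32 * (1 + A * finrank ℝ E) ≤ A ^ 2 * c * (finrank ℝ E : ℝ) ^ 2)
    {h x : E} (hh : h ≠ 0) (hsmall : ‖h‖ * (16 * (1 + A * finrank ℝ E)) ≤ c * A)
    {ε K : ℝ} (hε : 0 ≤ ε) (hεK : ε * K < ‖h‖ ^ 2)
    (hK : (φ x + β) * (finrank ℝ E + 2 - ‖x‖ ^ 2) + (dualPotential φ x + B)
      * (finrank ℝ E + 2 - ⟪gradient V (gradient φ x), gradient φ x⟫) ≤ K)
    (hmax : ∀ z, penalizedSecondDifference φ h (A * ‖h‖ ^ 2) ε β B z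
      ≤ penalizedSecondDifference φ h (A * ‖h‖ ^ 2) ε β B x) :
    penalizedSecondDifference φ h (A * ‖h‖ ^ 2) ε β B x ≤ 0 := by
  by_contra! hpos
  set n := (finrank ℝ E : ℝ)
  have hn : 1 ≤ n := Nat.one_le_cast.2 hE
  set w := dualPotential φ x + B with hw
  have hpert : 0 ≤ ε * (φ x + β) * w :=
    mul_nonneg (mul_nonneg hε (hβ x)) (le_trans (by positivity) (hB x))
  have hgain := two_mul_norm_sq_le_bregmanDivergence_add hV (hφ.differentiable (by norm_num)) hconv
    hc hn hVlow hA hAc (hB x) hh hsmall <| by rw [penalizedSecondDifference] at hpos; linarith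
  have hloss := hMA.bregmanDivergence_add_le_of_max (hV.differentiable two_ne_zero) hφ hconv hmax
  have hinner : ⟪gradient φ x, x⟫ ≤ (φ x + β) + w := by
    have hβB : 0 ≤ β + B := by
      have hB0 := hB 0
      rw [dualPotential, inner_zero_left] at hB0
      linarith [hβ 0, norm_nonneg (gradient φ 0), sq_nonneg n]
    rw [hw, dualPotential, real_inner_comm]
    linarith
  have hbracket : ε * ((φ x + β) * (n - ‖x‖ ^ 2)
      + w * (n - ⟪gradient V (gradient φ x), gradient φ x⟫) + 2 * ⟪gradient φ x, x⟫) ≤ ε * K :=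
    mul_le_mul_of_nonneg_left (by linarith) hε
  have hx : 0 ≤ A * ‖h‖ ^ 2 * ‖x‖ ^ 2 := by positivity
  have hAn : 0 ≤ A * n * ‖h‖ ^ 2 := by positivity
  linarith

lemma IsMongeAmpereSolution.secondDifference_le
    (hMA : IsMongeAmpereSolution φ V κ) (hE : 0 < finrank ℝ E) (hV : ContDiff ℝ 2 V)
    (hVtop : Tendsto V (cocompact E) atTop) (hφ : ContDiff ℝ 3 φ) (hconv : ConvexOn ℝ univ φ)
    (hc : 0 ≤ c) (hVlow : ∀ x v, c / (finrank ℝ E + ‖x‖) * ‖v‖ ^ 2 ≤ ⟪hessian V x v, v⟫)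
    {N D C : ℝ} (hN : 0 ≤ N) (hupper : ∀ x, ‖gradient φ x‖ ≤ N * (D + ‖x‖ ^ 2))
    (hC : 0 < C) (hlower : ∀ x, ‖x‖ ≤ C * (1 + ‖gradient φ x‖))
    (ha : 0 < a) (hβ : ∀ x, a * ‖x‖ - β ≤ φ x)
    (hB : ∀ x, ‖gradient φ x‖ + (finrank ℝ E : ℝ) ^ 2 ≤ dualPotential φ x + B)
    (hA : 0 < A) (hAc : 32 * (1 + A * finrank ℝ E) ≤ A ^ 2 * c * (finrank ℝ E : ℝ) ^ 2)
    {h : E} (hsmall : ‖h‖ * (16 * (1 + A * finrank ℝ E)) ≤ c * A) (x : E) :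
    secondDifference φ h x ≤ A * ‖h‖ ^ 2 * (dualPotential φ x + B) := by
  rcases eq_or_ne h 0 with rfl | hh
  · simp [secondDifference, two_mul]
  have hφ₁ : ContDiff ℝ 1 φ := hφ.of_le (by norm_num)
  have hφd : Differentiable ℝ φ := hφ₁.differentiable one_ne_zero
  have hβ' : ∀ x, a * ‖x‖ ≤ φ x + β := fun x => by linarith [hβ x]
  have hβ₀ : ∀ x, 0 ≤ φ x + β := fun x => le_trans (by positivity) (hβ' x)
  have hB₀ : ∀ x, 0 ≤ dualPotential φ x + B := fun x => le_trans (by positivity) (hB x)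
  have hVc : ConvexOn ℝ univ V := convexOn_of_hessian_nonneg hV fun x v =>
    le_trans (by positivity) (hVlow x v)
  obtain ⟨K, hK⟩ := exists_forall_perturbation_le (hV.of_le (by norm_num)) hVc hVtop hφ₁ hC hlower
    hβ₀ hB₀ (finrank ℝ E + 2)
  have hnonpos : ∀ ε, 0 < ε → ε * K < ‖h‖ ^ 2 →
      penalizedSecondDifference φ h (A * ‖h‖ ^ 2) ε β B x ≤ 0 := fun ε hε hεK => by
    have hcont : Continuous (penalizedSecondDifference φ h (A * ‖h‖ ^ 2) ε β B) := by
      have hφcont := hφ.continuous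
      have hgφ := continuous_gradient hφ₁
      unfold penalizedSecondDifference secondDifference dualPotential
      fun_prop
    obtain ⟨z, hz⟩ := hcont.exists_forall_ge (tendsto_penalizedSecondDifference hφd hconv hN hupper
      hC hlower ha hβ' hB₀ (by positivity) hε h)
    exact (hz x).trans <| hMA.penalizedSecondDifference_nonpos_of_max hE hV hφ hconv hc hVlow hβ₀ hB
      hA hAc hh hsmall hε.le hεK (hK z) hz
  have hlim : Tendsto (fun ε => penalizedSecondDifference φ h (A * ‖h‖ ^ 2) ε β B x) (𝓝[>] 0)
      (𝓝 (penalizedSecondDifference φ h (A * ‖h‖ ^ 2) 0 β B x)) := by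
    unfold penalizedSecondDifference
    exact (Continuous.tendsto (by fun_prop) 0).mono_left nhdsWithin_le_nhds
  have hεK : ∀ᶠ ε in 𝓝[>] (0 : ℝ), ε * K < ‖h‖ ^ 2 :=
    ((continuous_mul_const K).tendsto' 0 0 (zero_mul K)).mono_left nhdsWithin_le_nhds
      |>.eventually_lt_const (by positivity)
  have hzero := le_of_tendsto hlim <| (hεK.and self_mem_nhdsWithin).mono fun ε hε =>
    hnonpos ε hε.2 hε.1
  rw [penalizedSecondDifference] at hzero
  linarith

lemma IsMongeAmpereSolution.inner_hessian_le
    (hMA : IsMongeAmpereSolution φ V κ) (hE : 0 < finrank ℝ E) (hV : ContDiff ℝ 2 V)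
    (hVtop : Tendsto V (cocompact E) atTop) (hφ : ContDiff ℝ 3 φ) (hconv : ConvexOn ℝ univ φ)
    (hc : 0 < c) (hVlow : ∀ x v, c / (finrank ℝ E + ‖x‖) * ‖v‖ ^ 2 ≤ ⟪hessian V x v, v⟫)
    {N D C : ℝ} (hN : 0 ≤ N) (hupper : ∀ x, ‖gradient φ x‖ ≤ N * (D + ‖x‖ ^ 2))
    (hC : 0 < C) (hlower : ∀ x, ‖x‖ ≤ C * (1 + ‖gradient φ x‖))
    (ha : 0 < a) (hβ : ∀ x, a * ‖x‖ - β ≤ φ x)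
    (hB : ∀ x, ‖gradient φ x‖ + (finrank ℝ E : ℝ) ^ 2 ≤ dualPotential φ x + B)
    (hA : 0 < A) (hAc : 32 * (1 + A * finrank ℝ E) ≤ A ^ 2 * c * (finrank ℝ E : ℝ) ^ 2)
    (x v : E) : ⟪hessian φ x v, v⟫ ≤ A * (dualPotential φ x + B) * ‖v‖ ^ 2 := by
  have hsmall : ∀ᶠ h : E in 𝓝 0, ‖h‖ * (16 * (1 + A * finrank ℝ E)) ≤ c * A := by
    have hlim : Tendsto (fun h : E => ‖h‖ * (16 * (1 + A * finrank ℝ E))) (𝓝 0) (𝓝 0) :=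
      Continuous.tendsto' (by fun_prop) _ _ (by simp)
    exact hlim.eventually_le_const (by positivity)
  refine inner_hessian_le_of_secondDifference_le (hφ.of_le (by norm_num)) x v <|
    hsmall.mono fun h hh => ?_
  rw [mul_right_comm]
  exact hMA.secondDifference_le hE hV hVtop hφ hconv hc.le hVlow hN hupper hC hlower ha hβ hB hA
    hAc hh x

end Estimate

end Comparison

section HessianBound

lemma dualPotential_add_le {E : Type*} [NormedAddCommGroup E] [InnerProductSpace ℝ E]
    [CompleteSpace E] {φ : E → ℝ} (hφ : Differentiable ℝ φ) (hc : ConvexOn ℝ univ φ) (x z : E) :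
    dualPotential φ x + φ z ≤ ‖x‖ * ‖gradient φ x‖ + ‖gradient φ z‖ * (‖x‖ + ‖z‖) := by
  have htangent := add_inner_gradient_le hφ hc z x
  have hx := real_inner_le_norm x (gradient φ x)
  have hz : -(‖gradient φ z‖ * (‖x‖ + ‖z‖)) ≤ ⟪gradient φ z, x - z⟫ :=
    neg_le_of_abs_le <| (abs_real_inner_le_norm _ _).trans (by gcongr; exact norm_sub_le x z)
  rw [dualPotential]
  linarith

lemma exists_norm_gradient_le_dualPotential_add {E : Type*} [NormedAddCommGroup E]
    [InnerProductSpace ℝ E] [FiniteDimensional ℝ E] {φ : E → ℝ} (hφ : Differentiable ℝ φ)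
    (hc : ConvexOn ℝ univ φ) :
    ∃ z, ‖z‖ ≤ 1 ∧ ∀ x, ‖gradient φ x‖ ≤ dualPotential φ x + φ z := by
  obtain ⟨z, hz, hzmax⟩ := (isCompact_closedBall (0 : E) 1).exists_isMaxOn ⟨0, by simp⟩
    hφ.continuous.continuousOn
  refine ⟨z, mem_closedBall_zero_iff.1 hz, fun x => ?_⟩
  linarith [mul_norm_gradient_sub_le_dualPotential hφ hc zero_le_one
    (fun u hu => hzmax (mem_closedBall_zero_iff.2 hu)) x]

variable {d : ℕ} {V φ : EuclideanSpace ℝ (Fin d) → ℝ}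

lemma dualPotential_add_le_of_norm_gradient_le (hd : 0 < d) (hφ : Differentiable ℝ φ)
    (hc : ConvexOn ℝ univ φ) (hgrad : ∀ x, ‖gradient φ x‖ ≤ 1200 * √d * (d + ‖x‖ ^ 2))
    {z : EuclideanSpace ℝ (Fin d)} (hz : ‖z‖ ≤ 1) (x : EuclideanSpace ℝ (Fin d)) :
    dualPotential φ x + (φ z + d ^ 2) ≤ 6001 * (d + ‖x‖ ^ 2) ^ 2 := by
  have hd' : (1 : ℝ) ≤ d := Nat.one_le_cast.2 hd
  set s := √(d : ℝ)
  have hsq : s ^ 2 = d := sq_sqrt (by positivity)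
  have hs : 1 ≤ s := one_le_sqrt.2 hd'
  set S := d + ‖x‖ ^ 2 with hS
  have hdS : (d : ℝ) ≤ S := le_add_of_nonneg_right (sq_nonneg _)
  have hxs : ‖x‖ * s ≤ S := by nlinarith [sq_nonneg (‖x‖ - s), hS]
  have hsS : s ≤ S := by nlinarith
  have hgz : ‖gradient φ z‖ ≤ 2400 * s * d := by
    have hz2 : ‖z‖ ^ 2 ≤ 1 := pow_le_one₀ (norm_nonneg z) hz
    calc ‖gradient φ z‖ ≤ 1200 * s * (d + ‖z‖ ^ 2) := hgrad z
      _ ≤ 1200 * s * (2 * d) := by gcongr; linarith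
      _ = 2400 * s * d := by ring
  calc dualPotential φ x + (φ z + d ^ 2)
      ≤ ‖x‖ * ‖gradient φ x‖ + ‖gradient φ z‖ * (‖x‖ + ‖z‖) + d ^ 2 := by
        linarith [dualPotential_add_le hφ hc x z]
    _ ≤ ‖x‖ * (1200 * s * S) + 2400 * s * d * (‖x‖ + 1) + d ^ 2 := by
        gcongr
        exact hgrad x
    _ = 1200 * (‖x‖ * s) * S + 2400 * d * (‖x‖ * s + s) + d ^ 2 := by ring
    _ ≤ 1200 * S * S + 2400 * S * (S + S) + S ^ 2 := by gcongr
    _ = 6001 * S ^ 2 := by ring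

lemma norm_hessian_le_of_isBrenierPotential [IsProbabilityMeasure (gibbsMeasure V)] (hd : 0 < d)
    (hV : ContDiff ℝ 2 V) (hφ : ContDiff ℝ 3 φ) (hbr : IsBrenierPotential φ (gibbsMeasure V))
    (hiso : IsIsotropic (gibbsMeasure V)) {c₁ c₂ k : ℝ}
    (hupper : ∀ x v, ⟪hessian V x v, v⟫ ≤ c₁ * ‖v‖ ^ 2) (hc₂ : 0 < c₂)
    (hlower : ∀ x v, c₂ / (d + ‖x‖) * ‖v‖ ^ 2 ≤ ⟪hessian V x v, v⟫)
    (hk : 0 < k) (hkc : 32 * (1 + k) ≤ k ^ 2 * c₂) (x : EuclideanSpace ℝ (Fin d)) :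
    ‖hessian φ x‖ ≤ k * (6001 * (d + ‖x‖ ^ 2) ^ 2) := by
  obtain ⟨hconv, hφd, -⟩ := id hbr
  have hd' : (1 : ℝ) ≤ d := Nat.one_le_cast.2 hd
  have hφ₁ : ContDiff ℝ 1 φ := hφ.of_le (by norm_num)
  have hφ₂ : ContDiff ℝ 2 φ := hφ.of_le (by norm_num)
  have hVc : ConvexOn ℝ univ V := convexOn_of_hessian_nonneg hV fun y v =>
    le_trans (by positivity) (hlower y v)
  obtain ⟨κ, hMA⟩ := exists_isMongeAmpereSolution hV.continuous hφ₂ hbr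
  obtain ⟨M, hM, hVM⟩ := exists_le_mul_one_add_norm_sq hV hupper
  obtain ⟨C, hC, hgradlow⟩ := exists_norm_le_mul_one_add_norm_gradient hφ₁ hbr hM hVM
  obtain ⟨a, β, ha, hβ⟩ := exists_mul_norm_sub_le_of_isBrenierPotential hV.continuous hφ₁ hbr
  have hgrad := norm_gradient_le_of_isBrenierPotential hd hV.continuous hVc hiso hφ₁ hbr
  obtain ⟨z, hz, hbarrier⟩ := exists_norm_gradient_le_dualPotential_add hφd hconv
  have hAd : k / d * d = k := div_mul_cancel₀ k (by positivity)
  have hquad : ∀ v, ⟪hessian φ x v, v⟫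
      ≤ k / d * (dualPotential φ x + (φ z + d ^ 2)) * ‖v‖ ^ 2 :=
    hMA.inner_hessian_le (by simpa using hd) hV
      (tendsto_cocompact_atTop_of_isIsotropic hd hV.continuous hVc hiso) hφ hconv hc₂
      (by simpa using hlower) (by positivity) hgrad hC hgradlow ha hβ
      (fun y => by rw [finrank_euclideanSpace_fin]; linarith [hbarrier y]) (by positivity)
      (by rwa [finrank_euclideanSpace_fin, mul_right_comm, ← mul_pow, hAd]) x
  have hw : 0 ≤ dualPotential φ x + (φ z + d ^ 2) := by
    linarith [hbarrier x, norm_nonneg (gradient φ x), sq_nonneg (d : ℝ)]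
  calc ‖hessian φ x‖ ≤ k / d * (dualPotential φ x + (φ z + d ^ 2)) :=
        norm_le_of_isPositive (isPositive_hessian hφ₂ hconv x) (by positivity) hquad
    _ ≤ k * (6001 * (d + ‖x‖ ^ 2) ^ 2) := by
        gcongr
        · exact div_le_self hk.le hd'
        · exact dualPotential_add_le_of_norm_gradient_le hd hφd hconv hgrad hz x

lemma norm_hessian_le_max_of_isBrenierPotential [IsProbabilityMeasure (gibbsMeasure V)]
    (hV : ContDiff ℝ 2 V) (hφ : ContDiff ℝ 3 φ) (hbr : IsBrenierPotential φ (gibbsMeasure V))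
    (hiso : IsIsotropic (gibbsMeasure V)) {c₁ c₂ : ℝ}
    (hupper : ∀ x v, ⟪hessian V x v, v⟫ ≤ c₁ * ‖v‖ ^ 2) (hc₂ : 0 < c₂)
    (hlower : ∀ x v, c₂ / (d + ‖x‖) * ‖v‖ ^ 2 ≤ ⟪hessian V x v, v⟫)
    (x : EuclideanSpace ℝ (Fin d)) :
    ‖hessian φ x‖ ≤ max (64 * 6001 ^ 2 / c₂) 1 * (d + ‖x‖ ^ 2) ^ 2 := by
  rcases d.eq_zero_or_pos with rfl | hd
  · rw [Subsingleton.elim (hessian φ x) 0, norm_zero]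
    positivity
  set m := max (64 * 6001 ^ 2 / c₂) 1
  have hm : 1 ≤ m := le_max_right _ _
  have hmc : 64 * 6001 ^ 2 ≤ m * c₂ := (div_le_iff₀ hc₂).1 (le_max_left _ _)
  have hkc : 32 * (1 + m / 6001) ≤ (m / 6001) ^ 2 * c₂ := by nlinarith
  calc ‖hessian φ x‖ ≤ m / 6001 * (6001 * (d + ‖x‖ ^ 2) ^ 2) :=
        norm_hessian_le_of_isBrenierPotential hd hV hφ hbr hiso hupper hc₂ hlower (by positivity)
          hkc x
    _ = m * (d + ‖x‖ ^ 2) ^ 2 := by ring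

end HessianBound

lemma max_div_one_le_max_sq_mul_sq_div_sq_one {C c₁ c₂ : ℝ} (hc₁ : 1 ≤ c₁) :
    max (C / c₂) 1 ≤ max (C ^ 2 * c₁ ^ 2 / c₂ ^ 2) 1 := by
  refine max_le ?_ (le_max_right _ _)
  have hsq : (C / c₂) ^ 2 ≤ C ^ 2 * c₁ ^ 2 / c₂ ^ 2 := by
    rw [mul_div_right_comm, ← div_pow]
    exact le_mul_of_one_le_right (sq_nonneg _) (one_le_pow₀ hc₁)
  rcases le_total (C / c₂) 1 with h | h
  · exact h.trans (le_max_right _ _)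
  · exact (le_self_pow₀ h two_ne_zero).trans (hsq.trans (le_max_left _ _))

theorem statement_5_general :
    ∃ C : ℝ, 0 < C ∧ ∀ (d : ℕ) (V φ : EuclideanSpace ℝ (Fin d) → ℝ) (c₁ c₂ : ℝ),
      0 < c₂ → ContDiff ℝ 2 V → ContDiff ℝ 3 φ → ConvexOn ℝ Set.univ φ →
      IsProbabilityMeasure (volume.withDensity fun x => ENNReal.ofReal (Real.exp (-V x))) →
      IsIsotropic (volume.withDensity fun x => ENNReal.ofReal (Real.exp (-V x))) →
      Measure.map (gradient φ) (stdGaussian d) =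
        (volume.withDensity fun x => ENNReal.ofReal (Real.exp (-V x))) →
      (∀ x v : EuclideanSpace ℝ (Fin d),
        iteratedFDeriv ℝ 2 V x ![v, v] ≤ c₁ * ‖v‖ ^ 2) →
      (∀ x v : EuclideanSpace ℝ (Fin d),
        c₂ / (d + ‖x‖) * ‖v‖ ^ 2 ≤ iteratedFDeriv ℝ 2 V x ![v, v]) →
      ∀ x : EuclideanSpace ℝ (Fin d),
        ‖fderiv ℝ (gradient φ) x‖ ≤ max (C / c₂) 1 * (d + ‖x‖ ^ 2) ^ 2 := by
  refine ⟨64 * 6001 ^ 2, by norm_num,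
    fun d V φ c₁ c₂ hc₂ hV hφ hconv hprob hiso hmap hupper hlower => ?_⟩
  have : IsProbabilityMeasure (gibbsMeasure V) := hprob
  exact norm_hessian_le_max_of_isBrenierPotential hV hφ
    ⟨hconv, hφ.differentiable (by norm_num), hmap⟩ hiso
    (by simpa only [inner_hessian hV] using hupper) hc₂
    (by simpa only [inner_hessian hV] using hlower)

/-- L^∞ estimate on `∇T`: there is a universal constant `C > 0` such that if `T = ∇φ`
(with `φ` smooth and convex) sends the standard Gaussian onto `μ = e^{-V} dx`, `μ` is
centered and isotropic, and `c₁ Id ≥ Hess V(x) ≥ (c₂/(d + |x|)) Id` with `c₁ ≥ 1`,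
`c₂ > 0`, then `‖∇T(x)‖_op ≤ max(C c₁²/c₂², 1) (d + |x|²)²` for every `x`. -/
theorem statement_5 :
    ∃ C : ℝ, 0 < C ∧ ∀ (d : ℕ) (V φ : EuclideanSpace ℝ (Fin d) → ℝ) (c₁ c₂ : ℝ),
      1 ≤ c₁ → 0 < c₂ →
      ContDiff ℝ 2 V → ContDiff ℝ (⊤ : ℕ∞) φ → ConvexOn ℝ Set.univ φ →
      IsProbabilityMeasure (volume.withDensity fun x => ENNReal.ofReal (Real.exp (-V x))) →
      IsCentered (volume.withDensity fun x => ENNReal.ofReal (Real.exp (-V x))) →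
      IsIsotropic (volume.withDensity fun x => ENNReal.ofReal (Real.exp (-V x))) →
      Measure.map (gradient φ) (stdGaussian d) =
        (volume.withDensity fun x => ENNReal.ofReal (Real.exp (-V x))) →
      (∀ x v : EuclideanSpace ℝ (Fin d),
        iteratedFDeriv ℝ 2 V x ![v, v] ≤ c₁ * ‖v‖ ^ 2) →
      (∀ x v : EuclideanSpace ℝ (Fin d),
        c₂ / (d + ‖x‖) * ‖v‖ ^ 2 ≤ iteratedFDeriv ℝ 2 V x ![v, v]) →
      ∀ x : EuclideanSpace ℝ (Fin d),
        ‖fderiv ℝ (gradient φ) x‖ ≤ max (C * c₁ ^ 2 / c₂ ^ 2) 1 * (d + ‖x‖ ^ 2) ^ 2 := by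
  obtain ⟨C, hC, hbound⟩ := statement_5_general
  exact ⟨C ^ 2, by positivity, fun d V φ c₁ c₂ hc₁ hc₂ hV hφ hconv hprob _ hiso hmap hupper hlower
    x => (hbound d V φ c₁ c₂ hc₂ hV (contDiff_infty.1 hφ 3) hconv hprob hiso hmap hupper hlower
      x).trans (by gcongr ?_ * _; exact max_div_one_le_max_sq_mul_sq_div_sq_one hc₁)⟩
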